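/- Let u ≠ v ∈ {1,…,n} with a_u = a_v, and fix k¹ < k² in ℕ^ℓ. Fix any outcome (w, T) of the relaxed extended walk w = w^{k¹,k²} and its dependency tree in which μ^{k¹} and μ^{k²} exist; set φ = μ^{k¹} + 1 and ψ = μ^{k²} + 1, and assume w_φ = u and w_ψ = v. If there exists a pair (α̃, β̃) with 0 < α̃ < β̃ < ψ and a_{w_α̃} = a_{w_β̃}, then there exist two nodes α and β such that α ≠ β, a_{w_α} = a_{w_β}, {α, β} ≠ {φ, ψ}, and there is no collision between any two of the four paths p(φ−1), p(ψ−1), p(α−1), p(β−1). -/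

import Mathlib

open MeasureTheory
open scoped Classical ENNReal

noncomputable section

namespace EDW

/-- The star-extended domain `[m] ∪ {⋆₀, ⋆₁, …}`: `Sum.inl x` is a base element of `[m]`,
`Sum.inr t` is the star `⋆_t`. -/
abbrev Dom (m : ℕ) : Type := Sum (Fin m) ℕ

/-- A position (node) of the extended walk: its vertex together with, for every level `i`,
the value `a_i(μ)` that was computed at this position (if assigned). -/
structure Node (m n : ℕ) : Type where
  vtx : Fin n
  tag : ℕ → Option (Dom m)

theorem freshStar_exists {m : ℕ} (C : Finset (Dom m)) :
    ∃ t : ℕ, (Sum.inr t : Dom m) ∉ C := by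
  by_contra hc
  push_neg at hc
  have hinj : Function.Injective (fun t : ℕ => (Sum.inr t : Dom m)) := by
    intro a b h
    simpa using h
  have hsub : Set.range (fun t : ℕ => (Sum.inr t : Dom m)) ⊆ ↑C := by
    rintro x ⟨t, rfl⟩
    exact hc t
  exact Set.infinite_range_of_injective hinj (C.finite_toSet.subset hsub)

/-- The least `t` with `⋆_t ∉ C`. -/
def freshStar {m : ℕ} (C : Finset (Dom m)) : ℕ := Nat.find (freshStar_exists C)

variable {m n : ℕ}

/-- One level of the extended-walk loop; `fuel` bounds the number of remaining loop
iterations, and `sub s'` is the level-`(i-1)` walk started at `s'`. -/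
def loopF (a : Fin n → Fin m) (g : ℕ → Dom m → Bool) (r : ℕ → Dom m → Fin n)
    (sub : Fin n → Option (List (Node m n))) (i : ℕ) :
    ℕ → Finset (Dom m) → Bool → Fin n → List (Node m n) → Option (List (Node m n))
  | 0, _, _, _, _ => none
  | fuel + 1, C, star, sj, acc =>
    match sub sj with
    | none => none
    | some subw =>
      match subw.getLast? with
      | none => none
      | some xnode =>
        let useBase : Prop := star = false ∧ (Sum.inl (a xnode.vtx) : Dom m) ∉ C
        let y : Dom m := if useBase then Sum.inl (a xnode.vtx) else Sum.inr (freshStar C)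
        let star' : Bool := if useBase then false else true
        let xnode' : Node m n := ⟨xnode.vtx, fun t => if t = i then some y else xnode.tag t⟩
        let acc' := acc ++ subw.dropLast ++ [xnode']
        if g i y then loopF a g r sub i fuel (insert y C) star' (r i y) acc' else some acc'

/-- `walkF fuel i s'` computes the extended walk `walk(s', i)`; it returns `none` if the
fuel is insufficient (the true walk is obtained by letting the fuel go to infinity). -/
def walkF (a : Fin n → Fin m) (g : ℕ → Dom m → Bool) (r : ℕ → Dom m → Fin n) :
    ℕ → ℕ → Fin n → Option (List (Node m n))
  | _, 0, s' => some [⟨s', fun _ => none⟩]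
  | 0, _ + 1, _ => none
  | fuel + 1, i + 1, s' =>
    loopF a g r (fun sj => walkF a g r fuel i sj) (i + 1) (fuel + 1) ∅ false s' []

/-- The extended walk `walk(s, ℓ)`: `some w` iff the walk terminates, with output `w`. -/
def extWalk (a : Fin n → Fin m) (g : ℕ → Dom m → Bool) (r : ℕ → Dom m → Fin n)
    (ℓ : ℕ) (s : Fin n) : Option (List (Node m n)) :=
  if h : ∃ fuel, (walkF a g r fuel ℓ s).isSome = true then walkF a g r (Nat.find h) ℓ s
  else none

/-! ### The relaxed extended walk -/

/-- Storage for the recorded sets `C^{i,k¹}`. -/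
abbrev Store (m : ℕ) : Type := ℕ → Option (Finset (Dom m))

/-- One level of the relaxed extended-walk loop. `subR k' st s'` is the relaxed recursive
call at level `i - 1` with index parameter `k'` and store `st`; `subU s'` is the last
vertex of the un-relaxed walk `walk(s', i-1)`.  The extra loop state is: `j`, the number
of level-`i` nodes produced so far; `Crec = C_{min(j, k¹_i)}`; and the store `st`. -/
def rloopF (a : Fin n → Fin m) (g : ℕ → Dom m → Bool) (r : ℕ → Dom m → Fin n)
    (ℓ : ℕ) (k1 k2 : ℕ → ℕ)
    (subR : (ℕ → ℕ) → Store m → Fin n → Option (List (Node m n) × Store m))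
    (subU : Fin n → Option (Fin n)) (i : ℕ) (kctx : ℕ → ℕ) :
    ℕ → Finset (Dom m) → Bool → Fin n → List (Node m n) → ℕ → Finset (Dom m) → Store m →
      Option (List (Node m n) × Store m)
  | 0, _, _, _, _, _, _, _ => none
  | fuel + 1, C, star, sj, acc, j, Crec, st =>
    match subR (fun t => if t = i then j else if i < t then kctx t else 0) st sj with
    | none => none
    | some (subw, st₁) =>
      match subU sj, subw.getLast? with
      | some xv, some lastnd =>
        let useBase : Prop := star = false ∧ (Sum.inl (a xv) : Dom m) ∉ C
        let y : Dom m := if useBase then Sum.inl (a xv) else Sum.inr (freshStar C)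
        let star' : Bool := if useBase then false else true
        let lastnd' : Node m n := ⟨lastnd.vtx, fun t => if t = i then some y else lastnd.tag t⟩
        let acc' := acc ++ subw.dropLast ++ [lastnd']
        if g i y then
          rloopF a g r ℓ k1 k2 subR subU i kctx fuel (insert y C) star' (r i y) acc' (j + 1)
            (if j + 1 ≤ k1 i then insert y C else Crec) st₁
        else
          some (acc',
            if (∀ t, i < t → t ≤ ℓ → kctx t = k1 t) ∧ (∃ t, i < t ∧ t ≤ ℓ ∧ k1 t < k2 t) then
              fun t => if t = i then some Crec else st₁ t
            else st₁)
      | _, _ => none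

/-- The relaxed extended walk `walk^{k¹,k²}(s', i, kctx)`, with fuel. -/
def rwalkF (a : Fin n → Fin m) (g : ℕ → Dom m → Bool) (r : ℕ → Dom m → Fin n)
    (ℓ : ℕ) (k1 k2 : ℕ → ℕ) :
    ℕ → ℕ → (ℕ → ℕ) → Store m → Fin n → Option (List (Node m n) × Store m)
  | _, 0, _, st, s' => some ([⟨s', fun _ => none⟩], st)
  | 0, _ + 1, _, _, _ => none
  | fuel + 1, i + 1, kctx, st, s' =>
    let C₀ : Finset (Dom m) :=
      if (∀ t, i + 1 < t → t ≤ ℓ → kctx t = k2 t) ∧ (∃ t, i + 1 < t ∧ t ≤ ℓ ∧ k1 t < k2 t) ∧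
          0 < k2 (i + 1) then (st (i + 1)).getD ∅
      else ∅
    rloopF a g r ℓ k1 k2 (fun k' st' sj => rwalkF a g r ℓ k1 k2 fuel i k' st' sj)
      (fun sj => ((walkF a g r fuel i sj).bind List.getLast?).map Node.vtx)
      (i + 1) kctx (fuel + 1) C₀ false s' [] 0 C₀ st

/-- The relaxed extended walk `w^{k¹,k²} = walk^{k¹,k²}(s, ℓ, (0,…,0))`:
`some w` iff it terminates, with output `w`. -/
def extRWalk (a : Fin n → Fin m) (g : ℕ → Dom m → Bool) (r : ℕ → Dom m → Fin n)
    (ℓ : ℕ) (k1 k2 : ℕ → ℕ) (s : Fin n) : Option (List (Node m n)) :=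
  if h : ∃ fuel, (rwalkF a g r ℓ k1 k2 fuel ℓ (fun _ => 0) (fun _ => none) s).isSome = true
  then (rwalkF a g r ℓ k1 k2 (Nat.find h) ℓ (fun _ => 0) (fun _ => none) s).map Prod.fst
  else none

/-! ### Positions, levels and the dependency tree -/

/-- The vertex `w_μ` (positions are 1-indexed; `μ = 0` is the root, which has no vertex). -/
def vtxAt (w : List (Node m n)) (μ : ℕ) : Option (Fin n) :=
  if μ = 0 then none else (w[μ - 1]?).map Node.vtx

/-- The value `a_i(μ)`. -/
def tagAt (w : List (Node m n)) (μ i : ℕ) : Option (Dom m) :=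
  if μ = 0 then none else (w[μ - 1]?).bind fun nd => nd.tag i

/-- `level(μ)`: the least `i ∈ [1, ℓ]` with `g_i(a_i(μ)) = 1`, and `ℓ + 1` if there is
none (in particular for the root `0` and for the final position of the walk). -/
def levelOf (ℓ : ℕ) (g : ℕ → Dom m → Bool) (w : List (Node m n)) (μ : ℕ) : ℕ :=
  if h : ∃ i, (1 ≤ i ∧ i ≤ ℓ) ∧ ∃ y, tagAt w μ i = some y ∧ g i y = true then Nat.find h
  else ℓ + 1

/-- `a(μ) = a_{level(μ)}(μ)`. -/
def aAt (ℓ : ℕ) (g : ℕ → Dom m → Bool) (w : List (Node m n)) (μ : ℕ) : Option (Dom m) :=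
  tagAt w μ (levelOf ℓ g w μ)

/-- `next(μ) = w_{μ+1}`. -/
def nextAt (w : List (Node m n)) (μ : ℕ) : Option (Fin n) := vtxAt w (μ + 1)

/-- `ν` lies on the root-to-`μ` path of the dependency tree with level function `lvl`. -/
def OnPath (lvl : ℕ → ℕ) (ν μ : ℕ) : Prop :=
  ν ≤ μ ∧ ∀ ρ, ν < ρ → ρ ≤ μ → lvl ρ ≤ lvl ν

/-- The number of level-`i` nodes on the root-to-`μ` path. -/
def idxAt (lvl : ℕ → ℕ) (μ i : ℕ) : ℕ :=
  ((Finset.range (μ + 1)).filter fun ν => OnPath lvl ν μ ∧ lvl ν = i).card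

/-- Node `μ` of the dependency tree (of a walk of length `wlen`) has index `k`
(only the components `k_i` with `1 ≤ i ≤ ℓ` are relevant). -/
def HasIdx (ℓ : ℕ) (lvl : ℕ → ℕ) (wlen μ : ℕ) (k : ℕ → ℕ) : Prop :=
  μ ≤ wlen ∧ ∀ i, 1 ≤ i → i ≤ ℓ → idxAt lvl μ i = k i

/-- There is a collision between the root-to-`μ₁` path and the root-to-`μ₂` path. -/
def Collision (lvl : ℕ → ℕ) (av : ℕ → Option (Dom m)) (μ₁ μ₂ : ℕ) : Prop :=
  ∃ α β, OnPath lvl α μ₁ ∧ ¬ OnPath lvl α μ₂ ∧ OnPath lvl β μ₂ ∧ ¬ OnPath lvl β μ₁ ∧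
    lvl α = lvl β ∧ av α = av β

/-! ### The pseudorandom hash function and reachability -/

/-- The pseudorandom hash function of the family `H_{ℓ,m,n}` built from `g, r`
(`none` plays the role of `⋆`). -/
def hashOf (ℓ : ℕ) (g : ℕ → Dom m → Bool) (r : ℕ → Dom m → Fin n) (x : Fin m) :
    Option (Fin n) :=
  if h : ∃ i, (1 ≤ i ∧ i ≤ ℓ) ∧ g i (Sum.inl x) = true then some (r (Nat.find h) (Sum.inl x))
  else none

/-- `v ∈ f*_{a,h}(s)`: `v` is reachable from `s` in the digraph `G_{a,h}`. -/
def Reaches (a : Fin n → Fin m) (hsh : Fin m → Option (Fin n)) (s v : Fin n) : Prop :=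
  Relation.ReflTransGen (fun x y => hsh (a x) = some y) s v

/-- The second frequency moment `F₂(a)`. -/
def F2 (a : Fin n → Fin m) : ℕ :=
  ∑ i : Fin n, ∑ j : Fin n, if a i = a j then 1 else 0

/-! ### Index-vector combinatorics -/

/-- Equality of index vectors (only components `1..ℓ` matter). -/
def IdxEq (ℓ : ℕ) (k k' : ℕ → ℕ) : Prop := ∀ t, 1 ≤ t → t ≤ ℓ → k t = k' t

/-- The ordering `k < k'` on index vectors. -/
def IdxLt (ℓ : ℕ) (k k' : ℕ → ℕ) : Prop :=
  ∃ i, 1 ≤ i ∧ i ≤ ℓ ∧ k i < k' i ∧ ∀ t, i < t → t ≤ ℓ → k t = k' t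

/-- `k'` is an ancestor (index) of `k`. -/
def IsAncestorIdx (ℓ : ℕ) (k' k : ℕ → ℕ) : Prop :=
  ¬ IdxEq ℓ k' k ∧ ∃ i, 1 ≤ i ∧ i ≤ ℓ ∧ (∀ t, i < t → t ≤ ℓ → k' t = k t) ∧
    0 < k' i ∧ k' i ≤ k i ∧ ∀ t, 1 ≤ t → t < i → k' t = 0

/-- `k' ∈ P^k`: `k'` is `k` itself or an ancestor of `k`. -/
def InP (ℓ : ℕ) (k' k : ℕ → ℕ) : Prop := IdxEq ℓ k' k ∨ IsAncestorIdx ℓ k' k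

/-- `k'` is a level-`i` index. -/
def IsLevelIdx (ℓ i : ℕ) (k' : ℕ → ℕ) : Prop := 0 < k' i ∧ ∀ t, 1 ≤ t → t < i → k' t = 0

/-- A canonical index vector: zero outside `[1, ℓ]`. -/
def Canon (ℓ : ℕ) (k' : ℕ → ℕ) : Prop := ∀ t, t = 0 ∨ ℓ < t → k' t = 0

/-- `K_i`: the number of distinct level-`i` indices in `⋃_{k ∈ ks} P^k`. -/
def Kcount (ℓ : ℕ) (ks : List (ℕ → ℕ)) (i : ℕ) : ℕ :=
  Set.ncard {k' : ℕ → ℕ | Canon ℓ k' ∧ IsLevelIdx ℓ i k' ∧ ∃ k ∈ ks, InP ℓ k' k}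

/-- The rank (`1`-based) of the level-`i` index `κ` among the level-`i` indices of
`⋃_{k ∈ ks} P^k`, in increasing `<`-order. -/
def rankOf (ℓ : ℕ) (ks : List (ℕ → ℕ)) (i : ℕ) (κ : ℕ → ℕ) : ℕ :=
  Set.ncard {κ' : ℕ → ℕ |
    Canon ℓ κ' ∧ IsLevelIdx ℓ i κ' ∧ (∃ k ∈ ks, InP ℓ κ' k) ∧ IdxLt ℓ κ' κ} + 1

/-- Interpret a vector `k ∈ ℕ^ℓ` as a (canonical) index vector on levels `1..ℓ`. -/
def toIdx (ℓ : ℕ) (k : Fin ℓ → ℕ) : ℕ → ℕ :=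
  fun t => if h : 1 ≤ t ∧ t ≤ ℓ then k ⟨t - 1, by omega⟩ else 0

/-- The truncation `k^{i,j} = (0, …, 0, j, k_{i+1}, …, k_ℓ)`, indexing `μ^k_{i,j}`. -/
def truncIdx (k : ℕ → ℕ) (i j : ℕ) : ℕ → ℕ :=
  fun t => if t = i then j else if i < t then k t else 0

/-! ### The probability space -/

/-- The sample space: the functions `g_i`, `r_i` (on the star-extended domain) together
with the starting vertex `s`. -/
abbrev Sample (m n : ℕ) : Type := (ℕ → Dom m → Bool) × (ℕ → Dom m → Fin n) × Fin n

def gOf (ω : Sample m n) : ℕ → Dom m → Bool := ω.1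

def rOf (ω : Sample m n) : ℕ → Dom m → Fin n := ω.2.1

def sOf (ω : Sample m n) : Fin n := ω.2.2

/-- `P` is an admissible joint distribution of `(g, r, s)`: the starting vertex `s` is
uniform on `[n]`; each `g_i` (resp. `r_i`) is `τ`-wise independent and uniform on the
base domain, with fully independent uniform values on the stars; and all of
`g_1, …, g_ℓ, r_1, …, r_ℓ, s` are mutually independent.  This is expressed by requiring
that every admissible cylinder event has the correct product probability. -/
def GoodMeasure (ℓ τ : ℕ) (P : Measure (Sample m n)) : Prop :=
  ∀ (S T : Finset (ℕ × Dom m)) (vg : ℕ × Dom m → Bool) (vr : ℕ × Dom m → Fin n)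
    (s₀ : Fin n),
    (∀ q ∈ S, 1 ≤ q.1 ∧ q.1 ≤ ℓ) → (∀ q ∈ T, 1 ≤ q.1 ∧ q.1 ≤ ℓ) →
    (∀ i, (S.filter fun q => q.1 = i ∧ q.2.isLeft = true).card ≤ τ) →
    (∀ i, (T.filter fun q => q.1 = i ∧ q.2.isLeft = true).card ≤ τ) →
    P {ω : Sample m n |
        (∀ q ∈ S, gOf ω q.1 q.2 = vg q) ∧ (∀ q ∈ T, rOf ω q.1 q.2 = vr q) ∧ sOf ω = s₀} =
      (2 : ℝ≥0∞)⁻¹ ^ S.card * ((n : ℝ≥0∞))⁻¹ ^ T.card * (n : ℝ≥0∞)⁻¹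

/-! ### Events for the dependency tree -/

/-- The node indexed by `κ` exists in the dependency tree of the extended walk and its
`next`-value is `v`. -/
def NodeP (a : Fin n → Fin m) (ℓ : ℕ) (κ : ℕ → ℕ) (v : Fin n) (ω : Sample m n) : Prop :=
  ∃ w, extWalk a (gOf ω) (rOf ω) ℓ (sOf ω) = some w ∧
    ∃ μ, HasIdx ℓ (levelOf ℓ (gOf ω) w) w.length μ κ ∧ nextAt w μ = some v

/-- The event `F^{k,b}_{I,J}` (for the extended walk). -/
def Fev (a : Fin n → Fin m) (ℓ : ℕ) (k : ℕ → ℕ) (b : ℕ → ℕ → Fin n) (I J : ℕ)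
    (ω : Sample m n) : Prop :=
  (∀ i j, I < i → i ≤ ℓ → 1 ≤ j → j ≤ k i → NodeP a ℓ (truncIdx k i j) (b i j) ω) ∧
  ∀ j, 1 ≤ j → j ≤ J → NodeP a ℓ (truncIdx k I j) (b I j) ω

/-- The event fixing `g_1, …, g_{i-1}` and `r_1, …, r_{i-1}`. -/
def FixEv (i : ℕ) (gf : ℕ → Dom m → Bool) (rf : ℕ → Dom m → Fin n) : Set (Sample m n) :=
  {ω | ∀ t, 1 ≤ t → t < i → gOf ω t = gf t ∧ rOf ω t = rf t}

/-- The node indexed by `κ` exists in the dependency tree of the relaxed extended walk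
`w^{k¹,k²}` and its `next`-value is `v`. -/
def RNodeP (a : Fin n → Fin m) (ℓ : ℕ) (k1 k2 κ : ℕ → ℕ) (v : Fin n) (ω : Sample m n) :
    Prop :=
  ∃ w, extRWalk a (gOf ω) (rOf ω) ℓ k1 k2 (sOf ω) = some w ∧
    ∃ μ, HasIdx ℓ (levelOf ℓ (gOf ω) w) w.length μ κ ∧ nextAt w μ = some v

/-- The event `F^{K,b}_{I,J}` for `K = {k¹, k²}` (for the relaxed extended walk):
for every level `i ∈ [1, ℓ]` and every level-`i` index `κ` of `P^{k¹} ∪ P^{k²}` of rank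
`j`, if `i > I`, or `i = I` and `j ≤ J`, then `μ^K_{i,j}` exists and `next(μ^K_{i,j}) = b_{i,j}`. -/
def FevK (a : Fin n → Fin m) (ℓ : ℕ) (k1 k2 : ℕ → ℕ) (b : ℕ → ℕ → Fin n) (I J : ℕ)
    (ω : Sample m n) : Prop :=
  ∀ i κ, 1 ≤ i → i ≤ ℓ → Canon ℓ κ → IsLevelIdx ℓ i κ → (InP ℓ κ k1 ∨ InP ℓ κ k2) →
    (I < i ∨ (i = I ∧ rankOf ℓ [k1, k2] i κ ≤ J)) →
    RNodeP a ℓ k1 k2 κ (b i (rankOf ℓ [k1, k2] i κ)) ω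

/-!
Two nodes of equal level and equal value `a(γ) = a(δ)` give two duplicate positions: if the value is
a base element, then `γ` and `δ` themselves; if it is a star, then the first star of the call that
produced `γ`, which was drawn because the value `a_{w_ν}` at its position `ν` had been used by some
earlier node `ρ`, together with that `ρ`. If `γ` lies on one of the paths `p(α - 1)`, `p(β - 1)` of
a duplicate pair, but not on `p(φ - 1)` or `p(ψ - 1)`, then every node on the paths to the new pair
that was not on the four old paths has smaller level than `γ`, while `γ` itself is not on them. So
the set of nodes outside `p(φ - 1) ∪ p(ψ - 1)` decreases if sets are compared by their largest
difference, nodes being ordered by level first. For a pair minimizing this set a collision can only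
be one between `p(φ - 1)` and `p(ψ - 1)`, and the relaxation of the walk rules that out.
-/

/-! ### Index vectors -/

/-- Agreement of two index vectors in all components above level `i`. At `i = 0` this is
`IdxEq ℓ`. -/
def AgreeAbove (ℓ i : ℕ) (κ κ' : ℕ → ℕ) : Prop := ∀ t, i < t → t ≤ ℓ → κ t = κ' t

/-- `k¹` is smaller than `k²` in some component above level `i`: for the contexts that matter,
this says that the calls at level `i` on the way to `k¹` and to `k²` are different calls. -/
def LtAbove (ℓ i : ℕ) (k1 k2 : ℕ → ℕ) : Prop := ∃ t, i < t ∧ t ≤ ℓ ∧ k1 t < k2 t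

section Index

variable {ℓ i j : ℕ} {k k' κ κ' κ'' : ℕ → ℕ}

namespace AgreeAbove

theorem refl : AgreeAbove ℓ i κ κ := fun _ _ _ => rfl

theorem symm (h : AgreeAbove ℓ i κ κ') : AgreeAbove ℓ i κ' κ :=
  fun t ht htℓ => (h t ht htℓ).symm

theorem trans (h : AgreeAbove ℓ i κ κ') (h' : AgreeAbove ℓ i κ' κ'') : AgreeAbove ℓ i κ κ'' :=
  fun t ht htℓ => (h t ht htℓ).trans (h' t ht htℓ)

theorem mono (h : AgreeAbove ℓ i κ κ') (hij : i ≤ j) : AgreeAbove ℓ j κ κ' :=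
  fun t ht htℓ => h t (hij.trans_lt ht) htℓ

end AgreeAbove

theorem IdxLt.not_idxLt (h : IdxLt ℓ k k') : ¬ IdxLt ℓ k' k := by
  rintro ⟨i', hi', hi'ℓ, hlt', heq'⟩
  obtain ⟨i, -, hiℓ, hlt, heq⟩ := h
  rcases lt_trichotomy i i' with hii' | rfl | hii'
  · exact hlt'.ne (heq i' hii' hi'ℓ).symm
  · exact lt_asymm hlt hlt'
  · exact hlt.ne (heq' i hii' hiℓ).symm

theorem IdxLt.congr (h : IdxLt ℓ k κ) (hk : IdxEq ℓ k k') (hκ : IdxEq ℓ κ κ') :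
    IdxLt ℓ k' κ' := by
  obtain ⟨i, hi, hiℓ, hlt, heq⟩ := h
  exact ⟨i, hi, hiℓ, hk i hi hiℓ ▸ hκ i hi hiℓ ▸ hlt, AgreeAbove.trans
    (AgreeAbove.mono (i := 0) (AgreeAbove.symm hk) i.zero_le)
    (AgreeAbove.trans heq (AgreeAbove.mono (i := 0) hκ i.zero_le))⟩

theorem agreeAbove_truncIdx : AgreeAbove ℓ i (truncIdx κ i j) κ :=
  fun _ ht _ => (if_neg ht.ne').trans (if_pos ht)

theorem truncIdx_truncIdx_succ : truncIdx (truncIdx κ (i + 1) j) i 0 = truncIdx κ (i + 1) j := by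
  funext t
  unfold truncIdx
  split_ifs <;> lia

theorem idxLt_truncIdx_succ (hi : i + 1 ≤ ℓ) (h : AgreeAbove ℓ i (truncIdx κ (i + 1) j) k) :
    IdxLt ℓ k (truncIdx κ (i + 1) (j + 1)) := by
  refine ⟨i + 1, i.succ_pos, hi, ?_, ?_⟩
  · rw [← h (i + 1) i.lt_succ_self hi, truncIdx, truncIdx, if_pos rfl, if_pos rfl]
    exact j.lt_succ_self
  · exact (h.mono i.le_succ).symm.trans (agreeAbove_truncIdx.trans agreeAbove_truncIdx.symm)

theorem LtAbove.not_agreeAbove (h : LtAbove ℓ i k k') (hκ : AgreeAbove ℓ i κ k') :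
    ¬ AgreeAbove ℓ i κ k := by
  obtain ⟨t, ht, htℓ, hlt⟩ := h
  exact fun hκ' => hlt.ne ((hκ' t ht htℓ).symm.trans (hκ t ht htℓ))

end Index

/-! ### Paths and indices in a dependency tree -/

/-- All nodes after `ν` up to `μ` have level at most `i`, so that they lie in one call at level
`i`. The path relation `OnPath lvl ν μ` is the case `i = lvl ν`. -/
def LevelsLE (lvl : ℕ → ℕ) (i ν μ : ℕ) : Prop := ν ≤ μ ∧ ∀ ρ, ν < ρ → ρ ≤ μ → lvl ρ ≤ i

section Tree

variable {lvl : ℕ → ℕ} {ℓ N i t ν μ ρ : ℕ}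

namespace LevelsLE

theorem refl : LevelsLE lvl i ν ν := ⟨le_rfl, fun _ h h' => absurd h h'.not_gt⟩

theorem trans (h : LevelsLE lvl i ν μ) (h' : LevelsLE lvl i μ ρ) : LevelsLE lvl i ν ρ :=
  ⟨h.1.trans h'.1, fun σ hν hρ => (le_or_gt σ μ).elim (h.2 σ hν) fun hμ => h'.2 σ hμ hρ⟩

theorem mono (h : LevelsLE lvl i ν μ) (hit : i ≤ t) : LevelsLE lvl t ν μ :=
  ⟨h.1, fun σ hν hμ => (h.2 σ hν hμ).trans hit⟩

theorem succ (h : LevelsLE lvl i ν μ) (hμ : lvl (μ + 1) ≤ i) : LevelsLE lvl i ν (μ + 1) :=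
  ⟨h.1.trans μ.le_succ, fun σ hν hσ =>
    (Nat.le_succ_iff.mp hσ).elim (h.2 σ hν) fun hσμ => hσμ ▸ hμ⟩

theorem right_of_le (h : LevelsLE lvl i ν μ) (hν : ν ≤ ρ) (hμ : ρ ≤ μ) : LevelsLE lvl i ρ μ :=
  ⟨hμ, fun σ hρ => h.2 σ (hν.trans_lt hρ)⟩

theorem left_of_le (h : LevelsLE lvl i ν μ) (hν : ν ≤ ρ) (hμ : ρ ≤ μ) : LevelsLE lvl i ν ρ :=
  ⟨hν, fun σ hσ hρ => h.2 σ hσ (hρ.trans hμ)⟩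

end LevelsLE

theorem OnPath.refl : OnPath lvl ν ν := LevelsLE.refl

theorem OnPath.trans (h : OnPath lvl ν μ) (h' : OnPath lvl μ ρ) : OnPath lvl ν ρ := by
  rcases h.1.eq_or_lt with rfl | hlt
  · exact h'
  · exact LevelsLE.trans h (LevelsLE.mono h' (h.2 μ hlt le_rfl))

theorem onPath_succ :
    OnPath lvl ν (μ + 1) ↔ ν = μ + 1 ∨ OnPath lvl ν μ ∧ lvl (μ + 1) ≤ lvl ν := by
  constructor
  · intro h
    rcases h.1.eq_or_lt with hν | hν
    · exact Or.inl hν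
    · exact Or.inr ⟨LevelsLE.left_of_le h (Nat.lt_succ_iff.mp hν) μ.le_succ, h.2 _ hν le_rfl⟩
  · rintro (rfl | ⟨h, h'⟩)
    · exact OnPath.refl
    · exact LevelsLE.succ h h'

theorem OnPath.of_pred (hμ : 1 ≤ μ) (h : OnPath lvl ν (μ - 1)) (hlvl : lvl μ ≤ lvl ν) :
    OnPath lvl ν μ := by
  obtain ⟨μ, rfl⟩ := Nat.exists_eq_add_of_le' hμ
  exact LevelsLE.succ h hlvl

theorem idxAt_succ (lvl : ℕ → ℕ) (μ t : ℕ) :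
    idxAt lvl (μ + 1) t =
      if lvl (μ + 1) = t then idxAt lvl μ t + 1
      else if lvl (μ + 1) < t then idxAt lvl μ t else 0 := by
  have hfilter : (Finset.range (μ + 1)).filter (fun ν => OnPath lvl ν (μ + 1) ∧ lvl ν = t) =
      if lvl (μ + 1) ≤ t then (Finset.range (μ + 1)).filter (fun ν => OnPath lvl ν μ ∧ lvl ν = t)
      else ∅ := by
    ext ν
    split_ifs with ht <;> simp only [Finset.mem_filter, Finset.mem_range, onPath_succ,
      Finset.notMem_empty] <;> grind
  rw [idxAt, Finset.range_add_one, Finset.filter_insert, hfilter]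
  rcases lt_trichotomy (lvl (μ + 1)) t with ht | rfl | ht
  · rw [if_neg fun h => ht.ne h.2, if_pos ht.le, if_neg ht.ne, if_pos ht, idxAt]
  · rw [if_pos ⟨OnPath.refl, rfl⟩, if_pos le_rfl, if_pos rfl, Finset.card_insert_of_notMem, idxAt]
    simp
  · rw [if_neg fun h => ht.ne' h.2, if_neg ht.not_ge, if_neg ht.ne', if_neg ht.not_gt,
      Finset.card_empty]

theorem idxAt_zero (ht : lvl 0 ≠ t) : idxAt lvl 0 t = 0 := by
  rw [idxAt, Finset.card_eq_zero, Finset.filter_eq_empty_iff]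
  rintro ν hν ⟨-, rfl⟩
  exact ht (by rw [Finset.mem_range.mp hν |> Nat.lt_one_iff.mp])

theorem idxAt_lvl_pos (hν : 1 ≤ ν) : 0 < idxAt lvl ν (lvl ν) := by
  obtain ⟨ν, rfl⟩ := Nat.exists_eq_add_of_le' hν
  rw [idxAt_succ, if_pos rfl]
  exact Nat.succ_pos _

theorem idxAt_of_lt_lvl (hν : 1 ≤ ν) (ht : t < lvl ν) : idxAt lvl ν t = 0 := by
  obtain ⟨ν, rfl⟩ := Nat.exists_eq_add_of_le' hν
  rw [idxAt_succ, if_neg ht.ne', if_neg ht.not_gt]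

namespace LevelsLE

theorem idxAt_eq (h : LevelsLE lvl i ν μ) (ht : i < t) : idxAt lvl ν t = idxAt lvl μ t := by
  obtain ⟨hνμ, hle⟩ := h
  induction μ, hνμ using Nat.le_induction with
  | base => rfl
  | succ μ hνμ ih =>
    have hμt : lvl (μ + 1) < t := (hle _ (Nat.lt_succ_iff.mpr hνμ) le_rfl).trans_lt ht
    rw [idxAt_succ, if_neg hμt.ne, if_pos hμt]
    exact ih fun σ hν hσ => hle σ hν (hσ.trans μ.le_succ)

theorem idxAt_le (h : LevelsLE lvl i ν μ) : idxAt lvl ν i ≤ idxAt lvl μ i := by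
  obtain ⟨hνμ, hle⟩ := h
  induction μ, hνμ using Nat.le_induction with
  | base => rfl
  | succ μ hνμ ih =>
    have hμi := hle _ (Nat.lt_succ_iff.mpr hνμ) le_rfl
    refine (ih fun σ hν hσ => hle σ hν (hσ.trans μ.le_succ)).trans ?_
    rw [idxAt_succ]
    split_ifs <;> lia

theorem agreeAbove (h : LevelsLE lvl i ν μ) :
    AgreeAbove ℓ i (idxAt lvl ν) (idxAt lvl μ) := fun _ ht _ => h.idxAt_eq ht

end LevelsLE

theorem exists_idxAt_lt (h : ν < μ) :
    ∃ σ ∈ Finset.Ioc ν μ, LevelsLE lvl (lvl σ) ν μ ∧ idxAt lvl ν (lvl σ) < idxAt lvl μ (lvl σ) := by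
  obtain ⟨σ, hσ, hmax⟩ := (Finset.Ioc ν μ).exists_max_image lvl ⟨μ, Finset.right_mem_Ioc.mpr h⟩
  have hσ' := Finset.mem_Ioc.mp hσ
  have hle : LevelsLE lvl (lvl σ) ν μ := ⟨h.le, fun τ hν hμ => hmax τ (Finset.mem_Ioc.mpr ⟨hν, hμ⟩)⟩
  refine ⟨σ, hσ, hle, lt_of_lt_of_le ?_ (hle.right_of_le hσ'.1.le hσ'.2).idxAt_le⟩
  obtain ⟨τ, rfl⟩ := Nat.exists_eq_add_of_le' (Nat.one_le_of_lt hσ'.1)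
  rw [idxAt_succ, if_pos rfl, Nat.lt_succ_iff]
  exact (hle.left_of_le (Nat.lt_succ_iff.mp hσ'.1) (τ.le_succ.trans hσ'.2)).idxAt_le

theorem idxLt_idxAt (hlvl : Set.MapsTo lvl (Set.Icc 1 N) (Set.Icc 1 ℓ)) (h : ν < μ) (hμ : μ ≤ N) :
    IdxLt ℓ (idxAt lvl ν) (idxAt lvl μ) := by
  obtain ⟨σ, hσ, hle, hlt⟩ := exists_idxAt_lt (lvl := lvl) h
  have hσ' := Finset.mem_Ioc.mp hσ
  obtain ⟨hσ1, hσℓ⟩ := hlvl ⟨Nat.one_le_of_lt hσ'.1, hσ'.2.trans hμ⟩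
  exact ⟨lvl σ, hσ1, hσℓ, hlt, hle.agreeAbove⟩

theorem lt_of_idxLt_idxAt (hlvl : Set.MapsTo lvl (Set.Icc 1 N) (Set.Icc 1 ℓ)) (hν : ν ≤ N)
    (h : IdxLt ℓ (idxAt lvl ν) (idxAt lvl μ)) : ν < μ := by
  by_contra hμν
  rcases (not_lt.mp hμν).eq_or_lt with rfl | hlt
  · exact h.not_idxLt h
  · exact h.not_idxLt (idxLt_idxAt hlvl hlt hν)

theorem AgreeAbove.levelsLE (hlvl : Set.MapsTo lvl (Set.Icc 1 N) (Set.Icc 1 ℓ)) (hνμ : ν ≤ μ)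
    (hμ : μ ≤ N) (h : AgreeAbove ℓ i (idxAt lvl ν) (idxAt lvl μ)) : LevelsLE lvl i ν μ := by
  rcases hνμ.eq_or_lt with rfl | hlt
  · exact LevelsLE.refl
  · obtain ⟨σ, hσ, hle, hidx⟩ := exists_idxAt_lt (lvl := lvl) hlt
    have hσ' := Finset.mem_Ioc.mp hσ
    refine hle.mono (not_lt.mp fun hi => hidx.ne (h _ hi ?_))
    exact (hlvl ⟨Nat.one_le_of_lt hσ'.1, hσ'.2.trans hμ⟩).2

theorem onPath_iff_idxAt (hlvl : Set.MapsTo lvl (Set.Icc 1 N) (Set.Icc 1 ℓ)) (hν : 1 ≤ ν)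
    (hνN : ν ≤ N) (hμ : μ ≤ N) :
    OnPath lvl ν μ ↔ AgreeAbove ℓ (lvl ν) (idxAt lvl ν) (idxAt lvl μ) ∧
      idxAt lvl ν (lvl ν) ≤ idxAt lvl μ (lvl ν) := by
  constructor
  · exact fun h => ⟨LevelsLE.agreeAbove h, LevelsLE.idxAt_le h⟩
  · rintro ⟨hagree, hle⟩
    refine hagree.levelsLE hlvl (not_lt.mp fun hμν => ?_) hμ
    obtain ⟨t, ht, htℓ, hlt, -⟩ := idxLt_idxAt hlvl hμν hνN
    rcases lt_trichotomy t (lvl ν) with htν | rfl | htν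
    · rw [idxAt_of_lt_lvl hν htν] at hlt
      exact Nat.not_lt_zero _ hlt
    · exact hlt.not_ge hle
    · exact hlt.ne' (hagree t htν htℓ)

theorem LevelsLE.idxEq_truncIdx_succ {κ : ℕ → ℕ} {j : ℕ} (h : LevelsLE lvl i ν μ)
    (hidx : IdxEq ℓ (idxAt lvl ν) (truncIdx κ (i + 1) j)) (hμ : lvl (μ + 1) = i + 1) :
    IdxEq ℓ (idxAt lvl (μ + 1)) (truncIdx κ (i + 1) (j + 1)) := by
  intro t ht htℓ
  have hνt := hidx t ht htℓ
  rw [idxAt_succ, hμ]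
  rcases lt_trichotomy (i + 1) t with hit | rfl | hit
  · rw [if_neg hit.ne, if_pos hit, ← h.idxAt_eq (i.lt_succ_self.trans hit), hνt]
    exact (agreeAbove_truncIdx t hit htℓ).trans (agreeAbove_truncIdx t hit htℓ).symm
  · rw [if_pos rfl, ← h.idxAt_eq i.lt_succ_self, hνt, truncIdx, truncIdx, if_pos rfl, if_pos rfl]
  · rw [if_neg hit.ne', if_neg hit.not_gt, truncIdx, if_neg hit.ne, if_neg hit.not_gt]

end Tree

/-! ### Duplicates with collision-free paths -/

/-- The nodes on the root-to-`μ` path. -/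
def path (lvl : ℕ → ℕ) (μ : ℕ) : Finset ℕ := {ν ∈ Finset.range (μ + 1) | OnPath lvl ν μ}

/-- The pairs of distinct positions in `[1, N]` carrying the same value. -/
def duplicates {γ : Type*} (ax : ℕ → γ) (N : ℕ) : Finset (ℕ × ℕ) :=
  {p ∈ Finset.Icc 1 N ×ˢ Finset.Icc 1 N | p.1 ≠ p.2 ∧ ax p.1 = ax p.2}

/-- The nodes of the two paths `p(p.1 - 1)` and `p(p.2 - 1)` leading to a pair of positions. -/
def pathsTo (lvl : ℕ → ℕ) (p : ℕ × ℕ) : Finset ℕ := path lvl (p.1 - 1) ∪ path lvl (p.2 - 1)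

/-- The measure that decreases when a pair `p` whose paths collide is replaced by a pair read off
from the collision: the nodes on the paths to `p` but not on those to the fixed pair `b`, ordered by
level first and compared as sets by their largest difference. -/
def excess (lvl : ℕ → ℕ) (b p : ℕ × ℕ) : Colex (Finset (ℕ ×ₗ ℕ)) :=
  toColex ((pathsTo lvl p \ pathsTo lvl b).image fun ν => toLex (lvl ν, ν))

section Descent

variable {lvl : ℕ → ℕ} {N γ μ μ' ν : ℕ} {b p q : ℕ × ℕ}

theorem mem_path : ν ∈ path lvl μ ↔ OnPath lvl ν μ := by
  rw [path, Finset.mem_filter, Finset.mem_range, and_iff_right_of_imp]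
  exact fun h => Nat.lt_succ_of_le h.1

theorem mem_duplicates {γ : Type*} {ax : ℕ → γ} : p ∈ duplicates ax N ↔
    (1 ≤ p.1 ∧ p.1 ≤ N) ∧ (1 ≤ p.2 ∧ p.2 ≤ N) ∧ p.1 ≠ p.2 ∧ ax p.1 = ax p.2 := by
  rw [duplicates, Finset.mem_filter, Finset.mem_product, Finset.mem_Icc, Finset.mem_Icc, and_assoc]

theorem mem_pathsTo : ν ∈ pathsTo lvl p ↔ OnPath lvl ν (p.1 - 1) ∨ OnPath lvl ν (p.2 - 1) := by
  rw [pathsTo, Finset.mem_union, mem_path, mem_path]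

theorem OnPath.mem_pathsTo_union (h : OnPath lvl ν μ) (hμ : μ ∈ pathsTo lvl b ∪ pathsTo lvl p) :
    ν ∈ pathsTo lvl b ∪ pathsTo lvl p := by
  simp only [Finset.mem_union, mem_pathsTo] at hμ ⊢
  exact hμ.imp (Or.imp h.trans h.trans) (Or.imp h.trans h.trans)

theorem lvl_lt_of_onPath_pred (hμ : 1 ≤ μ) (hμp : μ ∈ pathsTo lvl b ∪ pathsTo lvl p)
    (hν : OnPath lvl ν (μ - 1)) (hνp : ν ∉ pathsTo lvl b ∪ pathsTo lvl p) : lvl ν < lvl μ :=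
  not_le.mp fun hle => hνp ((OnPath.of_pred hμ hν hle).mem_pathsTo_union hμp)

theorem excess_lt_excess (hq₁ : 1 ≤ q.1) (hq₂ : 1 ≤ q.2)
    (hqp₁ : q.1 ∈ pathsTo lvl b ∪ pathsTo lvl p) (hqp₂ : q.2 ∈ pathsTo lvl b ∪ pathsTo lvl p)
    (hγ : γ ∈ pathsTo lvl p) (hγb : γ ∉ pathsTo lvl b) (hγq : γ ∉ pathsTo lvl q)
    (hlvl₁ : lvl q.1 ≤ lvl γ) (hlvl₂ : lvl q.2 ≤ lvl γ) :
    excess lvl b q < excess lvl b p := by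
  refine Finset.Colex.toColex_lt_toColex_iff_exists_forall_lt.mpr
    ⟨toLex (lvl γ, γ), ?_, ?_, fun x hx hxp => ?_⟩
  · exact Finset.mem_image_of_mem _ (Finset.mem_sdiff.mpr ⟨hγ, hγb⟩)
  · rw [Finset.mem_image]
    rintro ⟨ν, hν, hνγ⟩
    obtain rfl : ν = γ := congrArg Prod.snd hνγ
    exact hγq (Finset.mem_sdiff.mp hν).1
  · obtain ⟨ν, hν, rfl⟩ := Finset.mem_image.mp hx
    obtain ⟨hνq, hνb⟩ := Finset.mem_sdiff.mp hν
    have hνp : ν ∉ pathsTo lvl b ∪ pathsTo lvl p := fun h => hxp <| Finset.mem_image_of_mem _ <|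
      Finset.mem_sdiff.mpr ⟨(Finset.mem_union.mp h).resolve_left hνb, hνb⟩
    refine Prod.Lex.toLex_lt_toLex.mpr (Or.inl ?_)
    rcases mem_pathsTo.mp hνq with h | h
    · exact (lvl_lt_of_onPath_pred hq₁ hqp₁ h hνp).trans_le hlvl₁
    · exact (lvl_lt_of_onPath_pred hq₂ hqp₂ h hνp).trans_le hlvl₂

theorem not_collision_of_injOn {m : ℕ} {av : ℕ → Option (Dom m)} {U : Set ℕ}
    (hU : Set.InjOn (fun ν => (lvl ν, av ν)) U) (hμ : ↑(path lvl μ) ⊆ U)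
    (hμ' : ↑(path lvl μ') ⊆ U) : ¬ Collision lvl av μ μ' := by
  rintro ⟨α, β, hα, hα', hβ, -, hlvl, hav⟩
  obtain rfl := hU (hμ (mem_path.mpr hα)) (hμ' (mem_path.mpr hβ)) (Prod.ext hlvl hav)
  exact hα' hβ

end Descent

/-! ### Good nodes -/

/-- The level-`i` nodes produced by the call at level `i` with context `κ`. -/
def callNodes (ℓ : ℕ) (lvl : ℕ → ℕ) (i : ℕ) (κ : ℕ → ℕ) : Set ℕ :=
  {ρ | 1 ≤ ρ ∧ lvl ρ = i ∧ AgreeAbove ℓ i (idxAt lvl ρ) κ}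

/-- The nodes whose values at level `i` are recorded in `C^{i,k¹}`. -/
def recordedNodes (ℓ : ℕ) (lvl : ℕ → ℕ) (k1 : ℕ → ℕ) (i : ℕ) : Set ℕ :=
  {ρ ∈ callNodes ℓ lvl i k1 | idxAt lvl ρ i ≤ k1 i}

/-- The condition under which a call at level `i` with context `κ` starts from the recorded set
`C^{i,k¹}` instead of `∅`. -/
def Relaxed (ℓ : ℕ) (k1 k2 : ℕ → ℕ) (i : ℕ) (κ : ℕ → ℕ) : Prop :=
  AgreeAbove ℓ i κ k2 ∧ LtAbove ℓ i k1 k2 ∧ 0 < k2 i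

/-- The nodes whose values the call at level `i` with context `κ` is not allowed to repeat. -/
def forbiddenNodes (ℓ : ℕ) (lvl : ℕ → ℕ) (k1 k2 : ℕ → ℕ) (i : ℕ) (κ : ℕ → ℕ) : Set ℕ :=
  {ρ | ρ ∈ callNodes ℓ lvl i κ ∨ Relaxed ℓ k1 k2 i κ ∧ ρ ∈ recordedNodes ℓ lvl k1 i}

/-- What the walk guarantees about a node `ν` with value `av ν = a(ν)` at a position with
`ax ν = a_{w_ν}`: its value is new, a base value is `ax ν`, and a star is drawn only after an
earlier star of the same call or because `ax ν` is already taken. The last two may fail after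
`μ^{k²}`, since there the vertex `x_{j+1}` of the un-relaxed walk need not be `w_ν`. -/
structure GoodNode (ℓ : ℕ) (k1 k2 : ℕ → ℕ) (lvl : ℕ → ℕ) (av : ℕ → Option (Dom m))
    (ax : ℕ → Option (Fin m)) (ν : ℕ) : Prop where
  one_le_lvl : 1 ≤ lvl ν
  lvl_le : lvl ν ≤ ℓ
  exists_tag : ∃ y, av ν = some y
  fresh : ∀ ρ ∈ forbiddenNodes ℓ lvl k1 k2 (lvl ν) (idxAt lvl ν), ρ < ν → av ρ ≠ av ν
  base : ¬ IdxLt ℓ k2 (idxAt lvl ν) → ∀ b, av ν = some (Sum.inl b) → ax ν = some b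
  star : ¬ IdxLt ℓ k2 (idxAt lvl ν) → ∀ s, av ν = some (Sum.inr s) →
    (∃ ρ ∈ callNodes ℓ lvl (lvl ν) (idxAt lvl ν), ρ < ν ∧ ∃ s', av ρ = some (Sum.inr s')) ∨
    ∃ ρ ∈ forbiddenNodes ℓ lvl k1 k2 (lvl ν) (idxAt lvl ν), ρ < ν ∧
      ∃ b, av ρ = some (Sum.inl b) ∧ ax ν = some b

/-- All non-root nodes up to `N` are good, and the root has level `ℓ + 1`. -/
structure GoodPrefix (ℓ : ℕ) (k1 k2 : ℕ → ℕ) (lvl : ℕ → ℕ) (av : ℕ → Option (Dom m))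
    (ax : ℕ → Option (Fin m)) (N : ℕ) : Prop where
  root : lvl 0 = ℓ + 1
  node : ∀ ν, 1 ≤ ν → ν ≤ N → GoodNode ℓ k1 k2 lvl av ax ν

section GoodPrefix

variable {ℓ : ℕ} {k1 k2 : ℕ → ℕ} {lvl : ℕ → ℕ} {av : ℕ → Option (Dom m)}
  {ax : ℕ → Option (Fin m)} {N i μ μ₁ μ₂ ν ρ : ℕ}

theorem IdxLt.ltAbove_or_agreeAbove (h : IdxLt ℓ k1 k2) (i : ℕ) :
    LtAbove ℓ i k1 k2 ∨ AgreeAbove ℓ i k1 k2 := by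
  obtain ⟨d, -, hdℓ, hlt, hagree⟩ := h
  rcases lt_or_ge i d with hid | hdi
  · exact Or.inl ⟨d, hid, hdℓ, hlt⟩
  · exact Or.inr (AgreeAbove.mono hagree hdi)

theorem OnPath.mem_callNodes (h : OnPath lvl ρ ν) (hρ : 1 ≤ ρ) (hlvl : lvl ρ = lvl ν) :
    ρ ∈ callNodes ℓ lvl (lvl ν) (idxAt lvl ν) :=
  ⟨hρ, hlvl, hlvl ▸ LevelsLE.agreeAbove h⟩

namespace GoodPrefix

theorem mono (h : GoodPrefix ℓ k1 k2 lvl av ax N) (hμ : μ ≤ N) :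
    GoodPrefix ℓ k1 k2 lvl av ax μ :=
  ⟨h.root, fun ν hν hνμ => h.node ν hν (hνμ.trans hμ)⟩

theorem mapsTo_lvl (h : GoodPrefix ℓ k1 k2 lvl av ax N) :
    Set.MapsTo lvl (Set.Icc 1 N) (Set.Icc 1 ℓ) :=
  fun ν hν => ⟨(h.node ν hν.1 hν.2).one_le_lvl, (h.node ν hν.1 hν.2).lvl_le⟩

theorem onPath_zero (h : GoodPrefix ℓ k1 k2 lvl av ax N) (hμ : μ ≤ N) : OnPath lvl 0 μ :=
  ⟨μ.zero_le, fun _ hν hνμ => h.root ▸ ((h.mapsTo_lvl ⟨hν, hνμ.trans hμ⟩).2.trans ℓ.le_succ)⟩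

theorem one_le_of_lvl_eq (h : GoodPrefix ℓ k1 k2 lvl av ax N) (hν : 1 ≤ ν) (hνN : ν ≤ N)
    (hlvl : lvl ρ = lvl ν) : 1 ≤ ρ := by
  by_contra hρ
  obtain rfl := Nat.lt_one_iff.mp (not_le.mp hρ)
  have hle := (h.mapsTo_lvl ⟨hν, hνN⟩).2
  rw [← hlvl, h.root] at hle
  exact ℓ.lt_succ_self.not_ge hle

theorem onPath_of_mem_callNodes (h : GoodPrefix ℓ k1 k2 lvl av ax N) (hνN : ν ≤ N) (hρν : ρ ≤ ν)
    (hρ : ρ ∈ callNodes ℓ lvl (lvl ν) (idxAt lvl ν)) : OnPath lvl ρ ν :=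
  AgreeAbove.levelsLE h.mapsTo_lvl hρν hνN (hρ.2.1 ▸ hρ.2.2)

theorem onPath_of_mem_recordedNodes (h : GoodPrefix ℓ k1 k2 lvl av ax N) (hi : 1 ≤ i)
    (hiℓ : i ≤ ℓ) (hμ₁N : μ₁ ≤ N) (hμ₁ : IdxEq ℓ (idxAt lvl μ₁) k1) (hρN : ρ ≤ N)
    (hρ : ρ ∈ recordedNodes ℓ lvl k1 i) : OnPath lvl ρ μ₁ := by
  obtain ⟨⟨hρ1, rfl, hagree⟩, hle⟩ := hρ
  refine (onPath_iff_idxAt h.mapsTo_lvl hρ1 hρN hμ₁N).mpr ⟨?_, (hμ₁ _ hi hiℓ).symm ▸ hle⟩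
  exact hagree.trans (AgreeAbove.mono (i := 0) (AgreeAbove.symm hμ₁) (Nat.zero_le _))

theorem ne_of_onPath (h : GoodPrefix ℓ k1 k2 lvl av ax N) (hνN : ν ≤ N) (hρ : 1 ≤ ρ)
    (hρν : ρ < ν) (hpath : OnPath lvl ρ ν) (hlvl : lvl ρ = lvl ν) : av ρ ≠ av ν :=
  (h.node ν (hρ.trans hρν.le) hνN).fresh ρ (Or.inl (hpath.mem_callNodes hρ hlvl)) hρν

theorem mem_forbiddenNodes_of_paths (hlt : IdxLt ℓ k1 k2) (hμ₁ : IdxEq ℓ (idxAt lvl μ₁) k1)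
    (hμ₂ : IdxEq ℓ (idxAt lvl μ₂) k2) (hρ₁ : OnPath lvl ρ μ₁) (hν₂ : OnPath lvl ν μ₂)
    (hρ : 1 ≤ ρ) (hν : 1 ≤ ν) (hlvl : lvl ρ = lvl ν) (hlvl1 : 1 ≤ lvl ν) (hlvlℓ : lvl ν ≤ ℓ) :
    ρ ∈ forbiddenNodes ℓ lvl k1 k2 (lvl ν) (idxAt lvl ν) := by
  have hρk1 : AgreeAbove ℓ (lvl ν) (idxAt lvl ρ) k1 :=
    (hlvl ▸ LevelsLE.agreeAbove hρ₁ : AgreeAbove ℓ (lvl ν) _ (idxAt lvl μ₁)).trans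
      (AgreeAbove.mono (i := 0) hμ₁ (Nat.zero_le _))
  have hνk2 : AgreeAbove ℓ (lvl ν) (idxAt lvl ν) k2 :=
    (LevelsLE.agreeAbove hν₂).trans (AgreeAbove.mono (i := 0) hμ₂ (Nat.zero_le _))
  rcases hlt.ltAbove_or_agreeAbove (lvl ν) with hltAbove | hagree
  · refine Or.inr ⟨⟨hνk2, hltAbove, ?_⟩, ⟨hρ, hlvl, hρk1⟩, ?_⟩
    · rw [← hμ₂ _ hlvl1 hlvlℓ]
      exact (idxAt_lvl_pos hν).trans_le (LevelsLE.idxAt_le hν₂)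
    · rw [← hμ₁ _ hlvl1 hlvlℓ, ← hlvl]
      exact LevelsLE.idxAt_le hρ₁
  · exact Or.inl ⟨hρ, hlvl, hρk1.trans (hagree.trans hνk2.symm)⟩

theorem injOn_paths (h : GoodPrefix ℓ k1 k2 lvl av ax μ₂) (hlt : IdxLt ℓ k1 k2)
    (hμ₁ : IdxEq ℓ (idxAt lvl μ₁) k1) (hμ₂ : IdxEq ℓ (idxAt lvl μ₂) k2) (hμ : μ₁ ≤ μ₂) :
    Set.InjOn (fun ν => (lvl ν, av ν)) ↑(pathsTo lvl (μ₁ + 1, μ₂ + 1)) := by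
  have key : ∀ ρ ν, ρ ∈ pathsTo lvl (μ₁ + 1, μ₂ + 1) → ν ∈ pathsTo lvl (μ₁ + 1, μ₂ + 1) →
      ρ < ν → lvl ρ = lvl ν → av ρ ≠ av ν := by
    intro ρ ν hρB hνB hρν hlvl
    rw [mem_pathsTo, Nat.add_sub_cancel, Nat.add_sub_cancel] at hρB hνB
    have hν : ν ≤ μ₂ := hνB.elim (fun h => h.1.trans hμ) (fun h => h.1)
    have hν1 : 1 ≤ ν := Nat.one_le_of_lt hρν
    have hρ1 := h.one_le_of_lvl_eq hν1 hν hlvl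
    have hlvlν := h.mapsTo_lvl ⟨hν1, hν⟩
    rcases hρB with hρ₁ | hρ₂ <;> rcases hνB with hν₁ | hν₂
    · exact h.ne_of_onPath hν hρ1 hρν (LevelsLE.left_of_le hρ₁ hρν.le hν₁.1) hlvl
    · exact (h.node ν hν1 hν).fresh ρ (mem_forbiddenNodes_of_paths hlt hμ₁ hμ₂ hρ₁ hν₂ hρ1 hν1
        hlvl hlvlν.1 hlvlν.2) hρν
    · exact h.ne_of_onPath hν hρ1 hρν (LevelsLE.left_of_le hρ₂ hρν.le hν) hlvl
    · exact h.ne_of_onPath hν hρ1 hρν (LevelsLE.left_of_le hρ₂ hρν.le hν) hlvl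
  intro ρ hρ ν hν heq
  obtain ⟨hlvl, hav⟩ := Prod.mk.inj heq
  rcases lt_trichotomy ρ ν with hlt | heq | hgt
  · exact absurd hav (key ρ ν hρ hν hlt hlvl)
  · exact heq
  · exact absurd hav.symm (key ν ρ hν hρ hgt hlvl.symm)

theorem not_idxLt (h : GoodPrefix ℓ k1 k2 lvl av ax μ₂) (hμ₂ : IdxEq ℓ (idxAt lvl μ₂) k2)
    (hν : ν ≤ μ₂) : ¬ IdxLt ℓ k2 (idxAt lvl ν) := by
  intro hlt
  have hlt' := hlt.congr (AgreeAbove.symm hμ₂) AgreeAbove.refl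
  rcases hν.eq_or_lt with rfl | hνμ
  · exact hlt'.not_idxLt hlt'
  · exact hlt'.not_idxLt (idxLt_idxAt h.mapsTo_lvl hνμ le_rfl)

-- A star on `p(ν)` is traced back to the first star `ν₀` of its call, which was drawn because
-- `a_{w_{ν₀}}` was already the value of `ρ`.
theorem exists_earlier_duplicate (h : GoodPrefix ℓ k1 k2 lvl av ax μ₂)
    (hμ₁ : IdxEq ℓ (idxAt lvl μ₁) k1) (hμ₂ : IdxEq ℓ (idxAt lvl μ₂) k2) (hμ : μ₁ ≤ μ₂)
    (hν1 : 1 ≤ ν) (hν : ν ≤ μ₂) {s : ℕ} (hs : av ν = some (Sum.inr s)) :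
    ∃ ρ ν₀, 1 ≤ ρ ∧ ρ < ν₀ ∧ OnPath lvl ν₀ ν ∧ lvl ν₀ = lvl ν ∧ lvl ρ = lvl ν ∧
      ax ρ = ax ν₀ ∧ (OnPath lvl ρ ν₀ ∨ OnPath lvl ρ μ₁) := by
  induction ν using Nat.strong_induction_on generalizing s with
  | _ ν ih =>
    rcases (h.node ν hν1 hν).star (h.not_idxLt hμ₂ hν) s hs with
      ⟨σ, hσ, hσν, s', hs'⟩ | ⟨ρ, hρ, hρν, b, hρb, hνb⟩
    · obtain ⟨ρ, ν₀, hρ, hρν₀, hpath, hν₀σ, hρσ, hax⟩ := ih σ hσν hσ.1 (hσν.le.trans hν) hs'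
      exact ⟨ρ, ν₀, hρ, hρν₀, hpath.trans (h.onPath_of_mem_callNodes hν hσν.le hσ),
        hν₀σ.trans hσ.2.1, hρσ.trans hσ.2.1, hax⟩
    · have hρμ : ρ ≤ μ₂ := hρν.le.trans hν
      have hlvl := h.mapsTo_lvl ⟨hν1, hν⟩
      have hρ_call : 1 ≤ ρ ∧ lvl ρ = lvl ν :=
        hρ.elim (fun hρ => ⟨hρ.1, hρ.2.1⟩) (fun hρ => ⟨hρ.2.1.1, hρ.2.1.2.1⟩)
      have hρ_base := (h.node ρ hρ_call.1 hρμ).base (h.not_idxLt hμ₂ hρμ) b hρb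
      exact ⟨ρ, ν, hρ_call.1, hρν, OnPath.refl, rfl, hρ_call.2, hρ_base.trans hνb.symm,
        hρ.imp (h.onPath_of_mem_callNodes hν hρν.le)
          fun hρ => h.onPath_of_mem_recordedNodes hlvl.1 hlvl.2 hμ hμ₁ hρμ hρ.2⟩

theorem le_of_mem_pathsTo {p : ℕ × ℕ} (h₁ : p.1 - 1 ≤ N) (h₂ : p.2 - 1 ≤ N)
    (hν : ν ∈ pathsTo lvl p) : ν ≤ N :=
  (mem_pathsTo.mp hν).elim (fun h => h.1.trans h₁) (fun h => h.1.trans h₂)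

theorem le_of_mem_pathsTo_union (hμ : μ₁ ≤ μ₂) {p : ℕ × ℕ} (hp : p ∈ duplicates ax μ₂)
    (hν : ν ∈ pathsTo lvl (μ₁ + 1, μ₂ + 1) ∪ pathsTo lvl p) : ν ≤ μ₂ := by
  obtain ⟨⟨-, hp₁⟩, ⟨-, hp₂⟩, -⟩ := mem_duplicates.mp hp
  exact (Finset.mem_union.mp hν).elim (le_of_mem_pathsTo hμ le_rfl)
    (le_of_mem_pathsTo ((Nat.sub_le _ _).trans hp₁) ((Nat.sub_le _ _).trans hp₂))

theorem exists_excess_lt (h : GoodPrefix ℓ k1 k2 lvl av ax μ₂)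
    (hμ₁ : IdxEq ℓ (idxAt lvl μ₁) k1) (hμ₂ : IdxEq ℓ (idxAt lvl μ₂) k2) (hμ : μ₁ ≤ μ₂)
    {p : ℕ × ℕ} (hp : p ∈ duplicates ax μ₂) {γ δ : ℕ}
    (hγ : γ ∈ pathsTo lvl p) (hγb : γ ∉ pathsTo lvl (μ₁ + 1, μ₂ + 1))
    (hδ : δ ∈ pathsTo lvl (μ₁ + 1, μ₂ + 1) ∪ pathsTo lvl p)
    (hne : γ ≠ δ) (hlvl : lvl γ = lvl δ) (hav : av γ = av δ) :
    ∃ q ∈ duplicates ax μ₂, excess lvl (μ₁ + 1, μ₂ + 1) q < excess lvl (μ₁ + 1, μ₂ + 1) p := by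
  have hγU := Finset.mem_union_right (pathsTo lvl (μ₁ + 1, μ₂ + 1)) hγ
  have hγμ : γ ≤ μ₂ := le_of_mem_pathsTo_union hμ hp hγU
  have hδμ : δ ≤ μ₂ := le_of_mem_pathsTo_union hμ hp hδ
  have hγ1 : 1 ≤ γ := Nat.one_le_iff_ne_zero.mpr fun h0 =>
    hγb (mem_pathsTo.mpr (Or.inr (h0 ▸ h.onPath_zero le_rfl)))
  have hδ1 : 1 ≤ δ := h.one_le_of_lvl_eq hγ1 hγμ hlvl.symm
  obtain ⟨b | s, hy⟩ := (h.node γ hγ1 hγμ).exists_tag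
  · have hax : ax γ = ax δ :=
      ((h.node γ hγ1 hγμ).base (h.not_idxLt hμ₂ hγμ) b hy).trans
        ((h.node δ hδ1 hδμ).base (h.not_idxLt hμ₂ hδμ) b (hav ▸ hy)).symm
    have hγδ : ¬ OnPath lvl γ (δ - 1) := fun hpath =>
      h.ne_of_onPath hδμ hγ1 (by have := hpath.1; lia) (OnPath.of_pred hδ1 hpath hlvl.ge) hlvl hav
    refine ⟨(γ, δ), mem_duplicates.mpr ⟨⟨hγ1, hγμ⟩, ⟨hδ1, hδμ⟩, hne, hax⟩,
      excess_lt_excess hγ1 hδ1 hγU hδ hγ hγb ?_ le_rfl hlvl.ge⟩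
    rw [mem_pathsTo, not_or]
    exact ⟨fun hpath => by have := hpath.1; lia, hγδ⟩
  · obtain ⟨ρ, ν₀, hρ, hρν₀, hν₀γ, hlvlν₀, hlvlρ, hax, hρpath⟩ :=
      h.exists_earlier_duplicate hμ₁ hμ₂ hμ hγ1 hγμ hy
    have hν₀U := hν₀γ.mem_pathsTo_union hγU
    have hρU := hρpath.elim (OnPath.mem_pathsTo_union · hν₀U)
      fun h => Finset.mem_union_left (pathsTo lvl p) (mem_pathsTo.mpr (Or.inl h))
    have hν₀μ := le_of_mem_pathsTo_union hμ hp hν₀U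
    refine ⟨(ρ, ν₀), mem_duplicates.mpr
      ⟨⟨hρ, hρν₀.le.trans hν₀μ⟩, ⟨hρ.trans hρν₀.le, hν₀μ⟩, hρν₀.ne, hax⟩,
      excess_lt_excess hρ (hρ.trans hρν₀.le) hρU hν₀U hγ hγb ?_ hlvlρ.le hlvlν₀.le⟩
    have hν₀γ' := hν₀γ.1
    rw [mem_pathsTo]
    rintro (hpath | hpath) <;> have := hpath.1 <;> lia

theorem exists_injOn_duplicate (h : GoodPrefix ℓ k1 k2 lvl av ax μ₂) (hlt : IdxLt ℓ k1 k2)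
    (hμ₁ : IdxEq ℓ (idxAt lvl μ₁) k1) (hμ₂ : IdxEq ℓ (idxAt lvl μ₂) k2) (hμ : μ₁ ≤ μ₂)
    (hdup : (duplicates ax μ₂).Nonempty) :
    ∃ p ∈ duplicates ax μ₂, Set.InjOn (fun ν => (lvl ν, av ν))
      ↑(pathsTo lvl (μ₁ + 1, μ₂ + 1) ∪ pathsTo lvl p) := by
  obtain ⟨p, hp, hmin⟩ :=
    (duplicates ax μ₂).exists_min_image (excess lvl (μ₁ + 1, μ₂ + 1)) hdup
  have hcol : ∀ γ ∈ pathsTo lvl (μ₁ + 1, μ₂ + 1) ∪ pathsTo lvl p,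
      ∀ δ ∈ pathsTo lvl (μ₁ + 1, μ₂ + 1) ∪ pathsTo lvl p,
      γ ≠ δ → lvl γ = lvl δ → av γ = av δ → γ ∈ pathsTo lvl (μ₁ + 1, μ₂ + 1) := by
    intro γ hγ δ hδ hne hlvl hav
    by_contra hγb
    obtain ⟨q, hq, hlt⟩ := h.exists_excess_lt hμ₁ hμ₂ hμ hp
      ((Finset.mem_union.mp hγ).resolve_left hγb) hγb hδ hne hlvl hav
    exact hlt.not_ge (hmin q hq)
  refine ⟨p, hp, fun γ hγ δ hδ heq => ?_⟩
  obtain ⟨hlvl, hav⟩ := Prod.mk.inj heq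
  by_contra hne
  exact hne (h.injOn_paths hlt hμ₁ hμ₂ hμ (hcol γ hγ δ hδ hne hlvl hav)
    (hcol δ hδ γ hγ (Ne.symm hne) hlvl.symm hav.symm) heq)

theorem exists_duplicate_not_collision (h : GoodPrefix ℓ k1 k2 lvl av ax μ₂)
    (hlt : IdxLt ℓ k1 k2) (hμ₁ : IdxEq ℓ (idxAt lvl μ₁) k1) (hμ₂ : IdxEq ℓ (idxAt lvl μ₂) k2)
    (hμ : μ₁ ≤ μ₂) (hdup : (duplicates ax μ₂).Nonempty) :
    ∃ p ∈ duplicates ax μ₂, ∀ ν ∈ ({μ₁, μ₂, p.1 - 1, p.2 - 1} : Set ℕ),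
      ∀ ρ ∈ ({μ₁, μ₂, p.1 - 1, p.2 - 1} : Set ℕ), ¬ Collision lvl av ν ρ := by
  obtain ⟨p, hp, hinj⟩ := h.exists_injOn_duplicate hlt hμ₁ hμ₂ hμ hdup
  have hpath : ∀ ν ∈ ({μ₁, μ₂, p.1 - 1, p.2 - 1} : Set ℕ),
      path lvl ν ⊆ pathsTo lvl (μ₁ + 1, μ₂ + 1) ∪ pathsTo lvl p := by
    rintro ν (rfl | rfl | rfl | rfl) ρ hρ <;> simp [pathsTo, hρ]
  exact ⟨p, hp, fun ν hν ρ hρ => not_collision_of_injOn hinj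
    (Finset.coe_subset.mpr (hpath ν hν)) (Finset.coe_subset.mpr (hpath ρ hρ))⟩

end GoodPrefix

end GoodPrefix

/-! ### Iterations of the loops -/

/-- The value `y` computed in a loop iteration in which `a_{x_{j+1}} = b`. -/
def nextTag (C : Finset (Dom m)) (star : Bool) (b : Fin m) : Dom m :=
  if star = false ∧ (Sum.inl b : Dom m) ∉ C then Sum.inl b else Sum.inr (freshStar C)

/-- The node `nd` with its value `a_i` set to `y`. -/
def Node.setTag (nd : Node m n) (i : ℕ) (y : Dom m) : Node m n :=
  ⟨nd.vtx, fun t => if t = i then some y else nd.tag t⟩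

/-- The store after the call at level `i` with context `κ`: the call on the way to `k¹` saves its
recorded set `Crec`. -/
def recordStore (ℓ : ℕ) (k1 k2 : ℕ → ℕ) (i : ℕ) (κ : ℕ → ℕ) (Crec : Finset (Dom m))
    (st : Store m) : Store m :=
  if AgreeAbove ℓ i κ k1 ∧ LtAbove ℓ i k1 k2 then Function.update st i (some Crec) else st

/-- No value `a_t` of `nd` with `1 ≤ t ≤ i` is accepted by `g_t`, so that `nd` has level greater
than `i`. -/
def Silent (g : ℕ → Dom m → Bool) (i : ℕ) (nd : Node m n) : Prop :=
  ∀ t, 1 ≤ t → t ≤ i → ∀ y, nd.tag t = some y → g t y = false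

section Loops

variable {a : Fin n → Fin m} {g : ℕ → Dom m → Bool} {r : ℕ → Dom m → Fin n} {ℓ : ℕ}
  {k1 k2 κ : ℕ → ℕ} {subR : (ℕ → ℕ) → Store m → Fin n → Option (List (Node m n) × Store m)}
  {subU : Fin n → Option (Fin n)} {sub : Fin n → Option (List (Node m n))} {i j fuel : ℕ}
  {C Crec : Finset (Dom m)} {star : Bool} {b : Fin m} {s : Fin n} {y : Dom m}
  {acc W : List (Node m n)} {nd : Node m n} {st st' : Store m}

theorem nextTag_notMem : nextTag C star b ∉ C := by
  unfold nextTag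
  split_ifs with h
  · exact h.2
  · exact Nat.find_spec (freshStar_exists C)

theorem nextTag_eq_inl {b' : Fin m} (h : nextTag C star b = Sum.inl b') : b = b' := by
  unfold nextTag at h
  split_ifs at h
  exact Sum.inl.inj h

theorem nextTag_eq_inr {t : ℕ} (h : nextTag C star b = Sum.inr t) :
    star = true ∨ (Sum.inl b : Dom m) ∈ C := by
  unfold nextTag at h
  split_ifs at h with hb
  rwa [not_and_or, Bool.not_eq_false, not_not] at hb

theorem Silent.setTag (h : Silent g i nd) (hy : g (i + 1) y = false) :
    Silent g (i + 1) (nd.setTag (i + 1) y) := by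
  intro t ht hti y' hy'
  rcases hti.eq_or_lt with rfl | hti
  · obtain rfl := Option.some.inj ((if_pos rfl).symm.trans hy')
    exact hy
  · exact h t ht (Nat.lt_succ_iff.mp hti) y' ((if_neg hti.ne).symm.trans hy')

theorem loopF_succ {W₀ : List (Node m n)} (h : sub s = some (W₀ ++ [nd]))
    (hy : nextTag C star (a nd.vtx) = y) :
    loopF a g r sub i (fuel + 1) C star s acc =
      if g i y then
        loopF a g r sub i fuel (insert y C) y.isRight (r i y) (acc ++ W₀ ++ [nd.setTag i y])
      else some (acc ++ W₀ ++ [nd.setTag i y]) := by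
  subst hy
  rw [loopF, h]
  by_cases hb : star = false ∧ (Sum.inl (a nd.vtx) : Dom m) ∉ C <;>
    simp [nextTag, Node.setTag, hb]

theorem rloopF_succ
    (h : rloopF a g r ℓ k1 k2 subR subU i κ (fuel + 1) C star s acc j Crec st = some (W, st')) :
    ∃ W₀ nd st₁ x y, subR (truncIdx κ i j) st s = some (W₀ ++ [nd], st₁) ∧ subU s = some x ∧
      nextTag C star (a x) = y ∧
      (g i y = true ∧
        rloopF a g r ℓ k1 k2 subR subU i κ fuel (insert y C) y.isRight (r i y)
          (acc ++ W₀ ++ [nd.setTag i y]) (j + 1) (if j + 1 ≤ k1 i then insert y C else Crec) st₁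
          = some (W, st') ∨
       g i y = false ∧ W = acc ++ W₀ ++ [nd.setTag i y] ∧
        st' = recordStore ℓ k1 k2 i κ Crec st₁) := by
  rw [rloopF] at h
  change (match subR (truncIdx κ i j) st s with
    | none => none
    | some (_, _) => _) = _ at h
  split at h
  · exact absurd h (by simp)
  rename_i W₁ st₁ hR
  split at h
  swap
  · exact absurd h (by simp)
  rename_i x nd hx hnd
  refine ⟨W₁.dropLast, nd, st₁, x, _, ?_, hx, rfl, ?_⟩
  · rw [hR, List.dropLast_append_getLast? _ hnd]
  · have hstar : (nextTag C star (a x)).isRight =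
        if star = false ∧ (Sum.inl (a x) : Dom m) ∉ C then false else true := by
      unfold nextTag
      split_ifs <;> rfl
    rw [hstar]
    by_cases hg : g i (nextTag C star (a x)) = true
    · exact Or.inl ⟨hg, (if_pos hg).symm.trans h⟩
    · have hexit := Prod.mk.inj (Option.some.inj ((if_neg hg).symm.trans h))
      refine Or.inr ⟨Bool.eq_false_iff.mpr hg, hexit.1.symm, hexit.2.symm.trans ?_⟩
      unfold recordStore AgreeAbove LtAbove
      congr 1
      funext t
      rw [Function.update_apply]

theorem rloopF_silent
    (hsub : ∀ k st s W nd st', subR k st s = some (W ++ [nd], st') → Silent g i nd)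
    (h : rloopF a g r ℓ k1 k2 subR subU (i + 1) κ fuel C star s acc j Crec st =
      some (W ++ [nd], st')) : Silent g (i + 1) nd := by
  induction fuel generalizing C star s acc j Crec st with
  | zero => exact absurd h (by simp [rloopF])
  | succ fuel ih =>
    obtain ⟨W₀, nd', st₁, x, y, hR, -, -, ⟨-, h⟩ | ⟨hg, hW, -⟩⟩ := rloopF_succ h
    · exact ih h
    · obtain rfl := List.singleton_inj.mp (List.append_inj_right' hW rfl)
      exact (hsub _ _ _ _ _ _ hR).setTag hg

theorem rloopF_prefix
    (h : rloopF a g r ℓ k1 k2 subR subU i κ fuel C star s acc j Crec st = some (W, st')) :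
    acc <+: W.dropLast := by
  induction fuel generalizing C star s acc j Crec st with
  | zero => exact absurd h (by simp [rloopF])
  | succ fuel ih =>
    obtain ⟨W₀, nd', st₁, x, y, -, -, -, ⟨-, h⟩ | ⟨-, rfl, -⟩⟩ := rloopF_succ h
    · exact ((List.prefix_append acc W₀).trans (List.prefix_append _ _)).trans (ih h)
    · rw [List.dropLast_concat]
      exact List.prefix_append _ _

theorem rloopF_eq_loopF
    (hsub : ∀ j st s W st', subR (truncIdx κ i j) st s = some (W, st') → sub s = some W)
    (h : rloopF a g r ℓ k1 k2 subR (fun s => ((sub s).bind List.getLast?).map Node.vtx)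
      i κ fuel C star s acc j Crec st = some (W, st')) :
    loopF a g r sub i fuel C star s acc = some W := by
  induction fuel generalizing C star s acc j Crec st with
  | zero => exact absurd h (by simp [rloopF])
  | succ fuel ih =>
    obtain ⟨W₀, nd, st₁, x, y, hR, hx, hy, hcases⟩ := rloopF_succ h
    have hs := hsub _ _ _ _ _ hR
    obtain rfl : nd.vtx = x := by simpa [hs] using hx
    rw [loopF_succ hs hy]
    rcases hcases with ⟨hg, h⟩ | ⟨hg, rfl, -⟩
    · rw [if_pos hg]
      exact ih h
    · rw [if_neg (Bool.eq_false_iff.mp hg)]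

theorem rwalkF_zero : rwalkF a g r ℓ k1 k2 fuel 0 κ st s = some ([⟨s, fun _ => none⟩], st) := by
  cases fuel <;> rw [rwalkF]

theorem rwalkF_silent (h : rwalkF a g r ℓ k1 k2 fuel i κ st s = some (W ++ [nd], st')) :
    Silent g i nd := by
  induction i generalizing fuel κ st s W nd st' with
  | zero => exact fun t ht ht' => absurd (ht.trans ht') (by decide)
  | succ i ih =>
    cases fuel with
    | zero => exact absurd h (by simp [rwalkF])
    | succ fuel =>
      rw [rwalkF] at h
      exact rloopF_silent (fun _ _ _ _ _ _ => ih) h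

theorem rwalkF_eq_walkF (h : rwalkF a g r ℓ k1 k2 fuel i κ st s = some (W, st'))
    (hκ : ¬ AgreeAbove ℓ i κ k2) : walkF a g r fuel i s = some W := by
  induction i generalizing fuel κ st s W st' with
  | zero =>
    obtain ⟨rfl, -⟩ := Prod.mk.inj (Option.some.inj (rwalkF_zero.symm.trans h))
    cases fuel <;> rw [walkF]
  | succ i ih =>
    cases fuel with
    | zero => exact absurd h (by simp [rwalkF])
    | succ fuel =>
      rw [rwalkF, if_neg fun hrel => hκ hrel.1] at h
      rw [walkF]
      refine rloopF_eq_loopF (fun j st s W st' h => ih h fun hagree => hκ ?_) h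
      exact agreeAbove_truncIdx.symm.trans (hagree.mono i.le_succ)

end Loops

/-! ### Invariants of the relaxed walk -/

/-- `C` is the set of values of the nodes of `S` up to `N`. -/
def IsTagSet (av : ℕ → Option (Dom m)) (N : ℕ) (S : Set ℕ) (C : Finset (Dom m)) : Prop :=
  ∀ y, y ∈ C ↔ ∃ ρ ∈ S, ρ ≤ N ∧ av ρ = some y

/-- The state of the walk after node `N`, with store `st`: all nodes so far are good, and `st` holds
`C^{t,k¹}` for every level `t ≤ i` and for every level whose call on the way to `k¹` is not
running. -/
structure WalkInv (ℓ : ℕ) (k1 k2 : ℕ → ℕ) (lvl : ℕ → ℕ) (av : ℕ → Option (Dom m))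
    (ax : ℕ → Option (Fin m)) (N i : ℕ) (st : Store m) : Prop where
  good : GoodPrefix ℓ k1 k2 lvl av ax N
  store : ∀ t, 1 ≤ t → t ≤ ℓ → LtAbove ℓ t k1 k2 →
    (t ≤ i ∨ ¬ AgreeAbove ℓ t (idxAt lvl N) k1) →
    IsTagSet av N (recordedNodes ℓ lvl k1 t) ((st t).getD ∅)

/-- The invariant of the loop at level `i` of a call with context `κ` that starts after node `N₀`;
`N` is the last node produced so far and `C`, `star`, `j`, `Crec`, `st` is the loop state. -/
structure LoopInv (ℓ : ℕ) (k1 k2 : ℕ → ℕ) (lvl : ℕ → ℕ) (av : ℕ → Option (Dom m))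
    (ax : ℕ → Option (Fin m)) (N₀ i : ℕ) (κ : ℕ → ℕ) (N : ℕ) (C : Finset (Dom m)) (star : Bool)
    (j : ℕ) (Crec : Finset (Dom m)) (st : Store m) : Prop where
  levels : LevelsLE lvl i N₀ N
  walk : WalkInv ℓ k1 k2 lvl av ax N 0 st
  idx : IdxEq ℓ (idxAt lvl N) (truncIdx κ i j)
  tags : IsTagSet av N (forbiddenNodes ℓ lvl k1 k2 i κ) C
  star_mem : star = true → ∃ ρ ∈ callNodes ℓ lvl i κ, ρ ≤ N ∧ ∃ s, av ρ = some (Sum.inr s)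
  recorded : AgreeAbove ℓ i κ k1 → LtAbove ℓ i k1 k2 →
    IsTagSet av N (recordedNodes ℓ lvl k1 i) Crec

section Invariants

variable {ℓ : ℕ} {k1 k2 : ℕ → ℕ} {lvl : ℕ → ℕ} {av : ℕ → Option (Dom m)}
  {ax : ℕ → Option (Fin m)} {N₀ N N' i j t ρ : ℕ} {κ κ' : ℕ → ℕ} {S S' : Set ℕ}
  {C Crec : Finset (Dom m)} {star : Bool} {b : Fin m} {y : Dom m} {st st₁ : Store m}

namespace IsTagSet

theorem empty (hS : ∀ ρ ≤ N, ρ ∉ S) : IsTagSet av N S ∅ :=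
  fun y => ⟨fun hy => absurd hy (Finset.notMem_empty y), fun ⟨ρ, hρ, hρN, _⟩ =>
    absurd hρ (hS ρ hρN)⟩

theorem congr (h : IsTagSet av N S C) (hS : ∀ ρ ≤ N, ρ ∈ S ↔ ρ ∈ S') : IsTagSet av N S' C :=
  fun y => (h y).trans <| exists_congr fun _ => and_congr_left fun hρ => hS _ hρ.1

theorem extend (h : IsTagSet av N S C) (hN : N ≤ N') (hS : ∀ ρ ∈ S, ρ ≤ N' → ρ ≤ N) :
    IsTagSet av N' S C :=
  fun y => (h y).trans <| exists_congr fun ρ => and_congr_right fun hρ =>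
    and_congr_left fun _ => ⟨fun hρN => hρN.trans hN, hS ρ hρ⟩

theorem insert (h : IsTagSet av N S C) (hN : N + 1 ∈ S) (hy : av (N + 1) = some y) :
    IsTagSet av (N + 1) S (insert y C) := by
  intro z
  rw [Finset.mem_insert, h z]
  constructor
  · rintro (rfl | ⟨ρ, hρ, hρN, hz⟩)
    · exact ⟨N + 1, hN, le_rfl, hy⟩
    · exact ⟨ρ, hρ, hρN.trans N.le_succ, hz⟩
  · rintro ⟨ρ, hρ, hρN, hz⟩
    rcases Nat.le_succ_iff.mp hρN with hρN | rfl
    · exact Or.inr ⟨ρ, hρ, hρN, hz⟩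
    · exact Or.inl (Option.some.inj (hz.symm.trans hy))

end IsTagSet

theorem LevelsLE.le_of_lt_lvl (h : LevelsLE lvl i N N') (hρ : ρ ≤ N') (hi : i < lvl ρ) : ρ ≤ N :=
  not_lt.mp fun hN => (h.2 ρ hN hρ).not_gt hi

theorem callNodes_congr (h : AgreeAbove ℓ i κ κ') :
    callNodes ℓ lvl i κ = callNodes ℓ lvl i κ' :=
  Set.ext fun _ => and_congr_right fun _ => and_congr_right fun _ =>
    ⟨fun hρ => hρ.trans h, fun hρ => hρ.trans h.symm⟩

theorem relaxed_congr (h : AgreeAbove ℓ i κ κ') :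
    Relaxed ℓ k1 k2 i κ ↔ Relaxed ℓ k1 k2 i κ' :=
  and_congr_left fun _ => ⟨h.symm.trans, h.trans⟩

theorem forbiddenNodes_congr (h : AgreeAbove ℓ i κ κ') :
    forbiddenNodes ℓ lvl k1 k2 i κ = forbiddenNodes ℓ lvl k1 k2 i κ' := by
  rw [forbiddenNodes, callNodes_congr h, relaxed_congr h, forbiddenNodes]

theorem forbiddenNodes_eq_callNodes (hlt : LtAbove ℓ i k1 k2) (h : AgreeAbove ℓ i κ k1) :
    forbiddenNodes ℓ lvl k1 k2 i κ = callNodes ℓ lvl i k1 := by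
  rw [← callNodes_congr h]
  exact Set.ext fun ρ => or_iff_left fun hrel => hlt.not_agreeAbove hrel.1.1 h

theorem lvl_of_mem_forbiddenNodes (h : ρ ∈ forbiddenNodes ℓ lvl k1 k2 i κ) : lvl ρ = i :=
  h.elim (fun h => h.2.1) (fun h => h.2.1.2.1)

theorem GoodPrefix.idxAt_le_of_mem_callNodes (h : GoodPrefix ℓ k1 k2 lvl av ax N)
    (hρ : ρ ∈ callNodes ℓ lvl i κ) (hρN : ρ ≤ N) (hκ : AgreeAbove ℓ i (idxAt lvl N) κ) :
    idxAt lvl ρ i ≤ idxAt lvl N i :=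
  LevelsLE.idxAt_le ((hρ.2.2.trans hκ.symm).levelsLE h.mapsTo_lvl hρN le_rfl)

theorem GoodPrefix.succ (h : GoodPrefix ℓ k1 k2 lvl av ax N)
    (hN : GoodNode ℓ k1 k2 lvl av ax (N + 1)) : GoodPrefix ℓ k1 k2 lvl av ax (N + 1) where
  root := h.root
  node ν hν hνN := (Nat.le_succ_iff.mp hνN).elim (h.node ν hν) fun hν => hν ▸ hN

theorem goodNode_of_nextTag (hlvl : lvl (N + 1) = i) (hi : 1 ≤ i) (hiℓ : i ≤ ℓ)
    (hκ : AgreeAbove ℓ i (idxAt lvl (N + 1)) κ)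
    (htags : IsTagSet av N (forbiddenNodes ℓ lvl k1 k2 i κ) C)
    (hstar : star = true → ∃ ρ ∈ callNodes ℓ lvl i κ, ρ ≤ N ∧ ∃ s, av ρ = some (Sum.inr s))
    (hav : av (N + 1) = some (nextTag C star b))
    (hax : ¬ IdxLt ℓ k2 (idxAt lvl (N + 1)) → ax (N + 1) = some b) :
    GoodNode ℓ k1 k2 lvl av ax (N + 1) := by
  subst hlvl
  rw [← callNodes_congr hκ] at hstar
  rw [← forbiddenNodes_congr hκ] at htags
  refine ⟨hi, hiℓ, ⟨_, hav⟩, fun ρ hρ hρN hρav => ?_, fun hk2 b' hb' => ?_, fun hk2 s hs => ?_⟩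
  · exact nextTag_notMem ((htags _).mpr ⟨ρ, hρ, Nat.lt_succ_iff.mp hρN, hρav.trans hav⟩)
  · rw [hax hk2, nextTag_eq_inl (Option.some.inj (hav.symm.trans hb'))]
  · rcases nextTag_eq_inr (Option.some.inj (hav.symm.trans hs)) with hst | hb
    · obtain ⟨ρ, hρ, hρN, hs'⟩ := hstar hst
      exact Or.inl ⟨ρ, hρ, Nat.lt_succ_iff.mpr hρN, hs'⟩
    · obtain ⟨ρ, hρ, hρN, hρb⟩ := (htags _).mp hb
      exact Or.inr ⟨ρ, hρ, Nat.lt_succ_iff.mpr hρN, b, hρb, hax hk2⟩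

theorem WalkInv.succ (h : WalkInv ℓ k1 k2 lvl av ax N i st) (hlvl : lvl (N + 1) = i + 1)
    (hN : GoodNode ℓ k1 k2 lvl av ax (N + 1)) : WalkInv ℓ k1 k2 lvl av ax (N + 1) 0 st where
  good := h.good.succ hN
  store t ht htℓ hlt hk := by
    have hk1 := hk.resolve_left (Nat.not_le.mpr ht)
    refine (h.store t ht htℓ hlt ?_).extend N.le_succ fun ρ hρ hρN =>
      (Nat.le_succ_iff.mp hρN).resolve_right (by rintro rfl; exact hk1 hρ.1.2.2)
    refine (le_or_gt t i).imp_right fun hit hk => hk1 (AgreeAbove.trans ?_ hk)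
    exact (LevelsLE.refl.succ (hlvl.trans_le hit)).agreeAbove.symm

namespace LoopInv

theorem init (hi : 1 ≤ i) (hiℓ : i ≤ ℓ) (h : WalkInv ℓ k1 k2 lvl av ax N 0 st)
    (hidx : IdxEq ℓ (idxAt lvl N) (truncIdx κ i 0))
    (hC : C = if Relaxed ℓ k1 k2 i κ then (st i).getD ∅ else ∅) :
    LoopInv ℓ k1 k2 lvl av ax N i κ N C false 0 C st := by
  have hκ : AgreeAbove ℓ i (idxAt lvl N) κ :=
    (AgreeAbove.mono (i := 0) hidx i.zero_le).trans agreeAbove_truncIdx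
  have hcall : ∀ ρ ≤ N, ρ ∉ callNodes ℓ lvl i κ := by
    intro ρ hρN hρ
    have hpos : 0 < idxAt lvl ρ i := hρ.2.1 ▸ idxAt_lvl_pos hρ.1
    have hle := h.good.idxAt_le_of_mem_callNodes hρ hρN hκ
    rw [hidx i hi hiℓ, truncIdx, if_pos rfl] at hle
    exact hpos.not_ge hle
  refine ⟨LevelsLE.refl, h, hidx, ?_, fun hstar => absurd hstar Bool.false_ne_true, ?_⟩
  · split_ifs at hC with hrel
    · subst hC
      have hk1 := hrel.2.1.not_agreeAbove (hκ.trans hrel.1)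
      refine (h.store i hi hiℓ hrel.2.1 (Or.inr hk1)).congr fun ρ hρN => ?_
      exact ⟨fun hρ => Or.inr ⟨hrel, hρ⟩, fun hρ => (hρ.resolve_left (hcall ρ hρN)).2⟩
    · subst hC
      exact .empty fun ρ hρN hρ => hρ.elim (hcall ρ hρN) fun hρ => hrel hρ.1
  · intro hk1 hlt
    rw [if_neg fun hrel => hlt.not_agreeAbove hrel.1 hk1] at hC
    subst hC
    exact .empty fun ρ hρN hρ => hcall ρ hρN (callNodes_congr hk1 ▸ hρ.1)

theorem agreeAbove_idxAt (h : LoopInv ℓ k1 k2 lvl av ax N₀ i κ N C star j Crec st) :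
    AgreeAbove ℓ i (idxAt lvl N) κ :=
  (AgreeAbove.mono (i := 0) h.idx i.zero_le).trans agreeAbove_truncIdx

theorem tags_extend (h : LoopInv ℓ k1 k2 lvl av ax N₀ (i + 1) κ N C star j Crec st)
    (hle : LevelsLE lvl i N N') :
    IsTagSet av N' (forbiddenNodes ℓ lvl k1 k2 (i + 1) κ) C :=
  h.tags.extend hle.1 fun _ hρ hρN => hle.le_of_lt_lvl hρN <|
    (lvl_of_mem_forbiddenNodes hρ).symm ▸ i.lt_succ_self

theorem recorded_extend (h : LoopInv ℓ k1 k2 lvl av ax N₀ (i + 1) κ N C star j Crec st)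
    (hle : LevelsLE lvl i N N') (hk1 : AgreeAbove ℓ (i + 1) κ k1)
    (hlt : LtAbove ℓ (i + 1) k1 k2) : IsTagSet av N' (recordedNodes ℓ lvl k1 (i + 1)) Crec :=
  (h.recorded hk1 hlt).extend hle.1 fun _ hρ hρN => hle.le_of_lt_lvl hρN <|
    hρ.1.2.1.symm ▸ i.lt_succ_self

theorem exit (h : LoopInv ℓ k1 k2 lvl av ax N₀ (i + 1) κ N C star j Crec st)
    (hle : LevelsLE lvl i N N') (hw : WalkInv ℓ k1 k2 lvl av ax N' i st₁) :
    LevelsLE lvl (i + 1) N₀ N' ∧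
      WalkInv ℓ k1 k2 lvl av ax N' (i + 1) (recordStore ℓ k1 k2 (i + 1) κ Crec st₁) := by
  have hκ : AgreeAbove ℓ (i + 1) (idxAt lvl N') κ :=
    (hle.mono i.le_succ).agreeAbove.symm.trans h.agreeAbove_idxAt
  refine ⟨h.levels.trans (hle.mono i.le_succ), hw.good, fun t ht htℓ hlt hk => ?_⟩
  unfold recordStore
  rcases eq_or_ne t (i + 1) with rfl | hti
  · split_ifs with hrec
    · rw [Function.update_self]
      exact h.recorded_extend hle hrec.1 hlt
    · exact hw.store _ ht htℓ hlt (Or.inr fun hk1 => hrec ⟨hκ.symm.trans hk1, hlt⟩)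
  · have hstore := hw.store t ht htℓ hlt (hk.imp_left fun hle => Nat.le_of_lt_succ
      (hle.lt_of_ne hti))
    split_ifs
    · rwa [Function.update_of_ne hti]
    · exact hstore

theorem next (h : LoopInv ℓ k1 k2 lvl av ax N₀ (i + 1) κ N C star j Crec st)
    (hle : LevelsLE lvl i N N') (hw : WalkInv ℓ k1 k2 lvl av ax N' i st₁) (hi : i + 1 ≤ ℓ)
    (hlvl : lvl (N' + 1) = i + 1) (hy : nextTag C star b = y) (hav : av (N' + 1) = some y)
    (hax : ¬ AgreeAbove ℓ i (truncIdx κ (i + 1) j) k2 → ax (N' + 1) = some b) :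
    LoopInv ℓ k1 k2 lvl av ax N₀ (i + 1) κ (N' + 1) (insert y C) y.isRight (j + 1)
      (if j + 1 ≤ k1 (i + 1) then insert y C else Crec) st₁ := by
  have hidx := hle.idxEq_truncIdx_succ h.idx hlvl
  have hκ : AgreeAbove ℓ (i + 1) (idxAt lvl (N' + 1)) κ :=
    (AgreeAbove.mono (i := 0) hidx (i + 1).zero_le).trans agreeAbove_truncIdx
  have hidx_lvl : idxAt lvl (N' + 1) (i + 1) = j + 1 :=
    (hidx _ i.succ_pos hi).trans (if_pos rfl)
  have hnew : N' + 1 ∈ callNodes ℓ lvl (i + 1) κ := ⟨N'.succ_pos, hlvl, hκ⟩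
  have htags := h.tags_extend hle
  have htags' := htags.insert (Or.inl hnew) hav
  have hgood : GoodNode ℓ k1 k2 lvl av ax (N' + 1) := by
    refine goodNode_of_nextTag hlvl i.succ_pos hi hκ htags (fun hstar => ?_) (hy ▸ hav)
      fun hk2 => hax fun hagree => ?_
    · exact (h.star_mem hstar).imp fun ρ hρ => ⟨hρ.1, hρ.2.1.trans hle.1, hρ.2.2⟩
    · exact hk2 ((idxLt_truncIdx_succ hi hagree).congr AgreeAbove.refl (AgreeAbove.symm hidx))
  have hw' := hw.succ hlvl hgood
  refine ⟨(h.levels.trans (hle.mono i.le_succ)).succ hlvl.le, hw', hidx, htags', ?_, ?_⟩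
  · intro hstar
    obtain ⟨s, rfl⟩ := Sum.isRight_iff.mp hstar
    exact ⟨N' + 1, hnew, le_rfl, s, hav⟩
  · intro hk1 hlt
    split_ifs with hj
    · rw [forbiddenNodes_eq_callNodes hlt hk1] at htags'
      refine htags'.congr fun ρ hρN => ⟨fun hρ => ⟨hρ, ?_⟩, fun hρ => hρ.1⟩
      exact (hw'.good.idxAt_le_of_mem_callNodes hρ hρN (hκ.trans hk1)).trans (hidx_lvl.trans_le hj)
    · refine (h.recorded_extend hle hk1 hlt).extend N'.le_succ fun ρ hρ hρN =>
        (Nat.le_succ_iff.mp hρN).resolve_right ?_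
      rintro rfl
      exact hj (hidx_lvl.symm.trans_le hρ.2)

end LoopInv

end Invariants

/-! ### Correctness of the relaxed walk -/

/-- The value `a_{w_ν}`, on which the duplicates sought by the theorem agree. -/
def keyAt (a : Fin n → Fin m) (w : List (Node m n)) (ν : ℕ) : Option (Fin m) :=
  (vtxAt w ν).map a

/-- Every level-`i` call with fuel `f` that contributes to the walk `w` extends the invariant of
the nodes before it to its own nodes. The last node of a call is left out, because its remaining
values are set by the caller. -/
def CallsPreserveInv (a : Fin n → Fin m) (g : ℕ → Dom m → Bool) (r : ℕ → Dom m → Fin n)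
    (ℓ : ℕ) (k1 k2 : ℕ → ℕ) (w : List (Node m n)) (f i : ℕ) : Prop :=
  ∀ κ st s W st' p, rwalkF a g r ℓ k1 k2 f i κ st s = some (W, st') →
    WalkInv ℓ k1 k2 (levelOf ℓ g w) (aAt ℓ g w) (keyAt a w) p.length 0 st →
    IdxEq ℓ (idxAt (levelOf ℓ g w) p.length) (truncIdx κ i 0) →
    p ++ W.dropLast <+: w →
    LevelsLE (levelOf ℓ g w) i p.length (p ++ W.dropLast).length ∧
      WalkInv ℓ k1 k2 (levelOf ℓ g w) (aAt ℓ g w) (keyAt a w) (p ++ W.dropLast).length i st'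

section Walk

variable {a : Fin n → Fin m} {g : ℕ → Dom m → Bool} {r : ℕ → Dom m → Fin n} {ℓ : ℕ}
  {k1 k2 κ : ℕ → ℕ} {i j f fuel t ν : ℕ} {C Crec : Finset (Dom m)} {star : Bool} {s : Fin n}
  {x : Fin n} {y : Dom m} {w p acc W : List (Node m n)} {nd : Node m n} {st st' : Store m}

theorem vtxAt_of_prefix (h : p ++ [nd] <+: w) : vtxAt w (p.length + 1) = some nd.vtx := by
  obtain ⟨q, rfl⟩ := h
  simp [vtxAt]

theorem tagAt_of_prefix (h : p ++ [nd] <+: w) : tagAt w (p.length + 1) t = nd.tag t := by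
  obtain ⟨q, rfl⟩ := h
  simp [tagAt]

theorem lt_length_of_vtxAt (h : vtxAt w (ν + 1) = some x) : ν < w.length := by
  obtain ⟨nd, hnd, -⟩ := Option.map_eq_some_iff.mp h
  exact (List.getElem?_eq_some_iff.mp hnd).1

theorem exists_vtxAt (hν : 1 ≤ ν) (hνw : ν ≤ w.length) : ∃ x, vtxAt w ν = some x := by
  obtain ⟨ν, rfl⟩ := Nat.exists_eq_add_of_le' hν
  exact ⟨_, congrArg (Option.map Node.vtx) (List.getElem?_eq_getElem hνw)⟩

theorem levelOf_zero : levelOf ℓ g w 0 = ℓ + 1 :=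
  dif_neg fun ⟨_, _, _, h, _⟩ => Option.some_ne_none _ h.symm

theorem levelOf_of_prefix (hnd : Silent g i nd) (hy : g (i + 1) y = true) (hi : i + 1 ≤ ℓ)
    (h : p ++ [nd.setTag (i + 1) y] <+: w) : levelOf ℓ g w (p.length + 1) = i + 1 := by
  have htag : tagAt w (p.length + 1) (i + 1) = some y := (tagAt_of_prefix h).trans (if_pos rfl)
  have hex : ∃ t, (1 ≤ t ∧ t ≤ ℓ) ∧ ∃ y, tagAt w (p.length + 1) t = some y ∧ g t y = true :=
    ⟨i + 1, ⟨i.succ_pos, hi⟩, y, htag, hy⟩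
  rw [levelOf, dif_pos hex, Nat.find_eq_iff]
  refine ⟨⟨⟨i.succ_pos, hi⟩, y, htag, hy⟩, ?_⟩
  rintro t hti ⟨⟨ht, -⟩, y', hy', hg⟩
  rw [tagAt_of_prefix h] at hy'
  rw [hnd t ht (Nat.lt_succ_iff.mp hti) y' ((if_neg hti.ne).symm.trans hy')] at hg
  exact Bool.false_ne_true hg

theorem LoopInv.of_rloopF (hi : i + 1 ≤ ℓ) (hcalls : CallsPreserveInv a g r ℓ k1 k2 w f i)
    (h : rloopF a g r ℓ k1 k2 (fun k st s => rwalkF a g r ℓ k1 k2 f i k st s)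
      (fun s => ((walkF a g r f i s).bind List.getLast?).map Node.vtx)
      (i + 1) κ fuel C star s acc j Crec st = some (W, st'))
    (hinv : LoopInv ℓ k1 k2 (levelOf ℓ g w) (aAt ℓ g w) (keyAt a w)
      p.length (i + 1) κ (p ++ acc).length C star j Crec st)
    (hW : p ++ W.dropLast <+: w) :
    LevelsLE (levelOf ℓ g w) (i + 1) p.length (p ++ W.dropLast).length ∧
      WalkInv ℓ k1 k2 (levelOf ℓ g w) (aAt ℓ g w) (keyAt a w)
        (p ++ W.dropLast).length (i + 1) st' := by
  induction fuel generalizing C star s acc j Crec st with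
  | zero => exact absurd h (by simp [rloopF])
  | succ fuel ih =>
    obtain ⟨W₀, nd, st₁, x, y, hR, hU, hy, hcases⟩ := rloopF_succ h
    have hcall := hcalls _ _ _ _ _ (p ++ acc) hR hinv.walk
      (by rw [truncIdx_truncIdx_succ]; exact hinv.idx)
    rw [List.dropLast_concat] at hcall
    rcases hcases with ⟨hg, h⟩ | ⟨-, rfl, rfl⟩
    · have hnode : p ++ acc ++ W₀ ++ [nd.setTag (i + 1) y] <+: w := by
        refine List.IsPrefix.trans ?_ hW
        simpa only [List.append_assoc, List.prefix_append_right_inj] using rloopF_prefix h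
      obtain ⟨hle, hw⟩ := hcall ((List.prefix_append _ _).trans hnode)
      have hlvl := levelOf_of_prefix (rwalkF_silent hR) hg hi hnode
      refine ih h ?_
      have hlen : (p ++ (acc ++ W₀ ++ [nd.setTag (i + 1) y])).length =
          (p ++ acc ++ W₀).length + 1 := by
        simp only [List.length_append, List.length_singleton, Nat.add_assoc]
      rw [hlen]
      refine hinv.next hle hw hi hlvl hy ?_ fun hk2 => ?_
      · rw [aAt, hlvl, tagAt_of_prefix hnode]
        exact if_pos rfl
      · rw [rwalkF_eq_walkF hR hk2] at hU
        obtain rfl : nd.vtx = x := by simpa using hU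
        exact congrArg (Option.map a) (vtxAt_of_prefix hnode)
    · rw [List.dropLast_concat, ← List.append_assoc] at hW ⊢
      obtain ⟨hle, hw⟩ := hcall hW
      exact hinv.exit hle hw

theorem callsPreserveInv (hi : i ≤ ℓ) : CallsPreserveInv a g r ℓ k1 k2 w f i := by
  intro κ st s W st' p h hinv hidx hW
  induction i generalizing f κ st s W st' p with
  | zero =>
    obtain ⟨rfl, rfl⟩ := Prod.mk.inj (Option.some.inj (rwalkF_zero.symm.trans h))
    rw [List.dropLast_singleton, List.append_nil]
    exact ⟨LevelsLE.refl, hinv⟩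
  | succ i ih =>
    cases f with
    | zero => exact absurd h (by simp [rwalkF])
    | succ f =>
      rw [rwalkF] at h
      refine LoopInv.of_rloopF hi
        (fun κ st s W st' p => ih (Nat.le_of_succ_le hi) κ st s W st' p) h ?_ hW
      rw [List.append_nil]
      exact .init i.succ_pos hi hinv hidx (by unfold Relaxed AgreeAbove LtAbove; congr)

theorem goodPrefix_of_extRWalk (h : extRWalk a g r ℓ k1 k2 s = some w) :
    GoodPrefix ℓ k1 k2 (levelOf ℓ g w) (aAt ℓ g w) (keyAt a w) (w.length - 1) := by
  have hinv : WalkInv ℓ k1 k2 (levelOf ℓ g w) (aAt ℓ g w) (keyAt a w) 0 0 fun _ => none :=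
    ⟨⟨levelOf_zero, fun ν hν hν0 => absurd hν hν0.not_gt⟩, fun t _ _ _ _ =>
      .empty fun ρ hρN hρ => absurd hρ.1.1 hρN.not_gt⟩
  have hidx : IdxEq ℓ (idxAt (levelOf ℓ g w) 0) (truncIdx (fun _ => 0) ℓ 0) := fun t _ htℓ => by
    rw [idxAt_zero (levelOf_zero.trans_gt (Nat.lt_succ_of_le htℓ)).ne', truncIdx]
    simp only [ite_self]
  unfold extRWalk at h
  split_ifs at h with hex
  obtain ⟨⟨W, st'⟩, hW, rfl⟩ := Option.map_eq_some_iff.mp h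
  have hcall := callsPreserveInv le_rfl _ _ _ _ _ [] hW hinv hidx (List.dropLast_prefix W)
  exact List.length_dropLast (xs := W) ▸ hcall.2.good

end Walk

theorem statement_16_general {ℓ : ℕ} {a : Fin n → Fin m} {k1 k2 : ℕ → ℕ} (hlt : IdxLt ℓ k1 k2)
    {g : ℕ → Dom m → Bool} {r : ℕ → Dom m → Fin n} {s : Fin n} {w : List (Node m n)}
    (hw : extRWalk a g r ℓ k1 k2 s = some w) {μ₁ μ₂ : ℕ}
    (hμ₁ : IdxEq ℓ (idxAt (levelOf ℓ g w) μ₁) k1) (hμ₂ : IdxEq ℓ (idxAt (levelOf ℓ g w) μ₂) k2)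
    (hμ₁w : μ₁ < w.length) (hμ₂w : μ₂ < w.length)
    (hdup : ∃ α β x y, 0 < α ∧ α < β ∧ β < μ₂ + 1 ∧
      vtxAt w α = some x ∧ vtxAt w β = some y ∧ a x = a y) :
    ∃ α β x y, 1 ≤ α ∧ α ≤ w.length ∧ 1 ≤ β ∧ β ≤ w.length ∧ α ≠ β ∧
      vtxAt w α = some x ∧ vtxAt w β = some y ∧ a x = a y ∧
      ¬(α = μ₁ + 1 ∧ β = μ₂ + 1) ∧ ¬(α = μ₂ + 1 ∧ β = μ₁ + 1) ∧
      ¬ Collision (levelOf ℓ g w) (aAt ℓ g w) μ₁ μ₂ ∧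
      ¬ Collision (levelOf ℓ g w) (aAt ℓ g w) μ₁ (α - 1) ∧
      ¬ Collision (levelOf ℓ g w) (aAt ℓ g w) μ₁ (β - 1) ∧
      ¬ Collision (levelOf ℓ g w) (aAt ℓ g w) μ₂ (α - 1) ∧
      ¬ Collision (levelOf ℓ g w) (aAt ℓ g w) μ₂ (β - 1) ∧
      ¬ Collision (levelOf ℓ g w) (aAt ℓ g w) (α - 1) (β - 1) := by
  have hgood := goodPrefix_of_extRWalk hw
  have hμ : μ₁ < μ₂ := lt_of_idxLt_idxAt hgood.mapsTo_lvl (Nat.le_sub_one_of_lt hμ₁w)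
    (hlt.congr (AgreeAbove.symm hμ₁) (AgreeAbove.symm hμ₂))
  have hnonempty : (duplicates (keyAt a w) μ₂).Nonempty := by
    obtain ⟨α, β, x, y, hα, hαβ, hβ, hx, hy, hxy⟩ := hdup
    have hβ' := Nat.le_of_lt_succ hβ
    refine ⟨(α, β), mem_duplicates.mpr ⟨⟨hα, hαβ.le.trans hβ'⟩, ⟨hα.trans hαβ, hβ'⟩, hαβ.ne, ?_⟩⟩
    rw [keyAt, keyAt, hx, hy, Option.map_some, Option.map_some, hxy]
  obtain ⟨⟨α, β⟩, hp, hcol⟩ :=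
    (hgood.mono (Nat.le_sub_one_of_lt hμ₂w)).exists_duplicate_not_collision hlt hμ₁ hμ₂ hμ.le
      hnonempty
  obtain ⟨hα, hβ, hαβ, hkey⟩ := mem_duplicates.mp hp
  have hαw := hα.2.trans hμ₂w.le
  have hβw := hβ.2.trans hμ₂w.le
  obtain ⟨x, hx⟩ := exists_vtxAt hα.1 hαw
  obtain ⟨y, hy⟩ := exists_vtxAt hβ.1 hβw
  have hxy : a x = a y := by simpa [keyAt, hx, hy] using hkey
  refine ⟨α, β, x, y, hα.1, hαw, hβ.1, hβw, hαβ, hx, hy, hxy, ?_, ?_, ?_, ?_, ?_, ?_, ?_, ?_⟩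
  · exact fun h => (Nat.lt_succ_of_le hβ.2).ne h.2
  · exact fun h => (Nat.lt_succ_of_le hα.2).ne h.1
  all_goals exact hcol _ (by simp) _ (by simp)

/-- Lemma 6.16: structure of bad cases for the relaxed extended walk. -/
theorem statement_16 (ℓ m n : ℕ) (hℓ : 0 < ℓ) (hm : 0 < m) (hn : 0 < n)
    (a : Fin n → Fin m) (u v : Fin n) (huv : u ≠ v) (hav : a u = a v)
    (k1 k2 : ℕ → ℕ) (hlt : IdxLt ℓ k1 k2)
    (g : ℕ → Dom m → Bool) (r : ℕ → Dom m → Fin n) (s : Fin n)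
    (w : List (Node m n)) (hw : extRWalk a g r ℓ k1 k2 s = some w)
    (μ₁ μ₂ : ℕ) (hμ₁ : HasIdx ℓ (levelOf ℓ g w) w.length μ₁ k1)
    (hμ₂ : HasIdx ℓ (levelOf ℓ g w) w.length μ₂ k2)
    (hu : vtxAt w (μ₁ + 1) = some u) (hv : vtxAt w (μ₂ + 1) = some v)
    (hdup : ∃ α β x y, 0 < α ∧ α < β ∧ β < μ₂ + 1 ∧
      vtxAt w α = some x ∧ vtxAt w β = some y ∧ a x = a y) :
    ∃ α β x y, 1 ≤ α ∧ α ≤ w.length ∧ 1 ≤ β ∧ β ≤ w.length ∧ α ≠ β ∧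
      vtxAt w α = some x ∧ vtxAt w β = some y ∧ a x = a y ∧
      ¬(α = μ₁ + 1 ∧ β = μ₂ + 1) ∧ ¬(α = μ₂ + 1 ∧ β = μ₁ + 1) ∧
      ¬ Collision (levelOf ℓ g w) (aAt ℓ g w) μ₁ μ₂ ∧
      ¬ Collision (levelOf ℓ g w) (aAt ℓ g w) μ₁ (α - 1) ∧
      ¬ Collision (levelOf ℓ g w) (aAt ℓ g w) μ₁ (β - 1) ∧
      ¬ Collision (levelOf ℓ g w) (aAt ℓ g w) μ₂ (α - 1) ∧
      ¬ Collision (levelOf ℓ g w) (aAt ℓ g w) μ₂ (β - 1) ∧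
      ¬ Collision (levelOf ℓ g w) (aAt ℓ g w) (α - 1) (β - 1) :=
  statement_16_general hlt hw hμ₁.2 hμ₂.2 (lt_length_of_vtxAt hu) (lt_length_of_vtxAt hv) hdup

end EDW
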